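/- (Isoperimetric-type inequality for Jacobians) Let f : Ω → ℝ^n be a C¹ (or Sobolev W^{1,n-1}) map on an open set Ω ⊂ ℝ^n, and suppose the closed ball B(x,r) ⊂ Ω. Then | avg_{B(x,r)} J(y,f) dy | ≤ C(n) ( avg_{S(x,r)} |D^♯f(y)| dy )^{n/(n-1)}, where J(y,f) = det Df(y) and D^♯f is the cofactor matrix of Df. -/

import Mathlib

open MeasureTheory Metric ENNReal Matrix
noncomputable section

variable {n : ℕ}

/-- The matrix of the differential `Df(y)` in the standard basis of `ℝ^n`. -/
def diffMatrix (f : EuclideanSpace ℝ (Fin n) → EuclideanSpace ℝ (Fin n))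
    (y : EuclideanSpace ℝ (Fin n)) : Matrix (Fin n) (Fin n) ℝ :=
  fun i j => fderiv ℝ f y (EuclideanSpace.single j 1) i

/-- The Jacobian determinant `J(y,f) = det Df(y)`. -/
def jacDet (f : EuclideanSpace ℝ (Fin n) → EuclideanSpace ℝ (Fin n))
    (y : EuclideanSpace ℝ (Fin n)) : ℝ :=
  (diffMatrix f y).det

/-- The (Hilbert–Schmidt) norm of the cofactor matrix `D^♯f(y)` of the differential,
the cofactor matrix being the transpose of the adjugate. -/
def cofNorm (f : EuclideanSpace ℝ (Fin n) → EuclideanSpace ℝ (Fin n))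
    (y : EuclideanSpace ℝ (Fin n)) : ℝ :=
  Real.sqrt (∑ i, ∑ j, ((Matrix.adjugate (diffMatrix f y))ᵀ i j) ^ 2)

open Filter Topology Set
open scoped NNReal Pointwise Polynomial

/-!
Let `u z` be the sum of the signs of `det Df` over the preimages of `z` in the ball. By the area
formula `∫ J = ∫ u`. The rows of the cofactor matrix of `Df` are divergence free, in a weak sense
for `C¹` maps, so integrating by parts in `∫ u · ∂Φ = ∫_B (∂Φ ∘ f) J` leaves only a boundary term:
`u` has bounded variation, with total variation at most a constant times `∫_S |D^♯f|`. The Sobolev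
inequality for such functions bounds the `L^{n/(n-1)}` norm of `u` by the same quantity, and since
`u` is integer valued, `∫ |u| ≤ ∫ |u|^{n/(n-1)}`.
-/

section NullLagrangian

variable {E : Type*} [NormedAddCommGroup E] [NormedSpace ℝ E]

lemma isUnit_one_add_of_norm_lt_one {A : Type*} [NormedRing A] [CompleteSpace A] {a : A}
    (ha : ‖a‖ < 1) : IsUnit (1 + a) := by
  simpa using isUnit_one_sub_of_norm_lt_one (x := -a) (by simpa using ha)

lemma det_one_add_pos_of_norm_lt_one [FiniteDimensional ℝ E] {T : E →L[ℝ] E} (hT : ‖T‖ < 1) :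
    0 < (1 + T).det := by
  have := FiniteDimensional.complete ℝ E
  have hcont : Continuous fun t : ℝ ↦ (1 + t • T).det :=
    ContinuousLinearMap.continuous_det.comp (by fun_prop)
  have hne : ∀ t ∈ Icc (0 : ℝ) 1, (1 + t • T).det ≠ 0 := fun t ht ↦ by
    have hlt : ‖t • T‖ < 1 := by
      rw [norm_smul, Real.norm_of_nonneg ht.1]
      exact (mul_le_of_le_one_left (norm_nonneg _) ht.2).trans_lt hT
    exact (LinearMap.isUnit_det _ ((isUnit_one_add_of_norm_lt_one hlt).map
      ContinuousLinearMap.toLinearMapRingHom)).ne_zero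
  by_contra! hle
  obtain ⟨t, ht, h0⟩ := intermediate_value_Icc' zero_le_one hcont.continuousOn
    (show (0 : ℝ) ∈ Icc _ _ by simpa [ContinuousLinearMap.det] using hle)
  exact hne t ht h0

lemma bijective_id_add_of_lipschitzWith [CompleteSpace E] {g : E → E} {c : ℝ≥0} (hc : c < 1)
    (hg : LipschitzWith c g) : Function.Bijective fun y ↦ y + g y := by
  have happrox : ApproximatesLinearOn (fun y ↦ y + g y)
      (ContinuousLinearEquiv.refl ℝ E : E →L[ℝ] E) univ c :=
    fun a _ b _ ↦ by simpa [add_sub_add_comm] using hg.norm_sub_le a b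
  have hsmall : Subsingleton E ∨ c < ‖((ContinuousLinearEquiv.refl ℝ E).symm : E →L[ℝ] E)‖₊⁻¹ := by
    rcases subsingleton_or_nontrivial E with hE | hE
    · exact .inl hE
    · right
      rwa [ContinuousLinearEquiv.refl_symm, ContinuousLinearEquiv.coe_refl,
        ContinuousLinearMap.nnnorm_id, inv_one]
  exact ⟨injOn_univ.mp (happrox.injOn hsmall), happrox.surjective hsmall⟩

lemma eval_charpoly_neg [FiniteDimensional ℝ E] (T : E →L[ℝ] E) (s : ℝ) :
    (-(T : E →ₗ[ℝ] E)).charpoly.eval s = (s • (1 : E →L[ℝ] E) + T).det := by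
  rw [LinearMap.eval_charpoly, sub_neg_eq_add, Algebra.algebraMap_eq_smul_one]
  rfl

variable [FiniteDimensional ℝ E] [MeasurableSpace E] [BorelSpace E] (μ : Measure E)
  [μ.IsAddHaarMeasure]

lemma setIntegral_det_one_add_fderiv {g : E → E} {s : Set E} (hs : MeasurableSet s)
    (hd : Differentiable ℝ g) (hsupp : ∀ y ∉ s, g y = 0) {c : ℝ≥0} (hc : c < 1)
    (hg : LipschitzWith c g) :
    ∫ y in s, (1 + fderiv ℝ g y).det ∂μ = μ.real s := by
  have := FiniteDimensional.complete ℝ E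
  have hbij := bijective_id_add_of_lipschitzWith hc hg
  have himage : (fun y ↦ y + g y) '' s = s := by
    rw [← compl_inj_iff, ← image_compl_eq hbij]
    exact (show EqOn (fun y ↦ y + g y) id sᶜ from fun y hy ↦ by simp [hsupp y hy]).image_eq.trans
      (image_id _)
  have hderiv : ∀ y, HasFDerivAt (fun y ↦ y + g y) (1 + fderiv ℝ g y) y :=
    fun y ↦ (hasFDerivAt_id y).add (hd y).hasFDerivAt
  have hchange := integral_image_eq_integral_abs_det_fderiv_smul μ hs
    (fun y _ ↦ (hderiv y).hasFDerivWithinAt) hbij.injective.injOn fun _ ↦ (1 : ℝ)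
  simp only [himage, smul_eq_mul, mul_one, integral_const, measureReal_restrict_apply_univ]
    at hchange
  rw [hchange]
  refine integral_congr_ae (.of_forall fun y ↦ (abs_of_pos ?_).symm)
  exact det_one_add_pos_of_norm_lt_one
    ((norm_fderiv_le_of_lipschitz ℝ hg).trans_lt (by exact_mod_cast hc))

-- Lagrange interpolation writes the value at `t` as a fixed combination of values beyond `S`.
lemma integral_polynomial_eval_eq {α : Type*} [MeasurableSpace α] {ν : Measure α}
    {p : α → ℝ[X]} {q : ℝ[X]} {N : ℕ} {S : ℝ} (hp : ∀ a, (p a).degree < N) (hq : q.degree < N)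
    (hint : ∀ s, Integrable (fun a ↦ (p a).eval s) ν)
    (h : ∀ s ≥ S, ∫ a, (p a).eval s ∂ν = q.eval s) (t : ℝ) :
    ∫ a, (p a).eval t ∂ν = q.eval t := by
  let c : ℕ → ℝ := fun k ↦ (Lagrange.basis (.range N) (fun k : ℕ ↦ S + k) k).eval t
  have hinj : InjOn (fun k : ℕ ↦ S + (k : ℝ)) (Finset.range N) := fun a _ b _ hab ↦ by
    simpa using hab
  have heval : ∀ {r : ℝ[X]}, r.degree < N →
      r.eval t = ∑ k ∈ Finset.range N, r.eval (S + k) * c k := fun {r} hr ↦ by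
    conv_lhs => rw [Lagrange.eq_interpolate (f := r) hinj (by simpa using hr)]
    simp [Lagrange.interpolate_apply, Polynomial.eval_finsetSum, c]
  calc ∫ a, (p a).eval t ∂ν
      = ∑ k ∈ Finset.range N, (∫ a, (p a).eval (S + k) ∂ν) * c k := by
        simp_rw [fun a ↦ heval (hp a)]
        rw [integral_finsetSum _ fun k _ ↦ (hint _).mul_const _]
        simp_rw [integral_mul_const]
    _ = ∑ k ∈ Finset.range N, q.eval (S + k) * c k :=
        Finset.sum_congr rfl fun k _ ↦ by rw [h _ (by simp)]
    _ = q.eval t := (heval hq).symm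

lemma setIntegral_det_smul_one_add_fderiv {h : E → E} {K : Set E} (hK : MeasurableSet K)
    (hd : Differentiable ℝ h) (hsupp : ∀ y ∉ K, h y = 0) {L : ℝ≥0} (hL : LipschitzWith L h)
    {s : ℝ} (hs : L < s) :
    ∫ y in K, (s • (1 : E →L[ℝ] E) + fderiv ℝ h y).det ∂μ =
      s ^ Module.finrank ℝ E * μ.real K := by
  have hs0 : 0 < s := L.coe_nonneg.trans_lt hs
  have hlip : LipschitzWith (‖s⁻¹‖₊ * L) fun y ↦ s⁻¹ • h y := (lipschitzWith_smul s⁻¹).comp hL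
  have hlt : ‖s⁻¹‖₊ * L < 1 := by
    rw [← NNReal.coe_lt_coe]
    simpa [abs_of_pos hs0, inv_mul_lt_iff₀ hs0] using hs
  rw [← setIntegral_det_one_add_fderiv μ hK (hd.fun_const_smul s⁻¹)
    (fun y hy ↦ by simp [hsupp y hy]) hlt hlip, ← integral_const_mul]
  refine integral_congr_ae (.of_forall fun y ↦ ?_)
  have hfactor : s • (1 : E →L[ℝ] E) + fderiv ℝ h y = s • (1 + s⁻¹ • fderiv ℝ h y) := by
    rw [smul_add, smul_inv_smul₀ hs0.ne']
  simp only [hfactor, fderiv_fun_const_smul (hd y), ContinuousLinearMap.det,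
    ContinuousLinearMap.toLinearMap_smul, LinearMap.det_smul]

theorem integral_det_fderiv_eq_zero [Nontrivial E] {h : E → E} (hh : ContDiff ℝ 1 h)
    (hc : HasCompactSupport h) : ∫ y, (fderiv ℝ h y).det ∂μ = 0 := by
  have hd := hh.differentiable one_ne_zero
  obtain ⟨L, hL⟩ := hh.lipschitzWith_of_hasCompactSupport hc one_ne_zero
  have hzero : ∀ y ∉ tsupport h, (fderiv ℝ h y).det = 0 := fun y hy ↦ by
    rw [image_eq_zero_of_notMem_tsupport fun hy' ↦ hy (tsupport_fderiv_subset ℝ hy'),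
      ContinuousLinearMap.det, ContinuousLinearMap.toLinearMap_zero,
      LinearMap.det_zero, zero_pow Module.finrank_pos.ne']
  have hint : ∀ s : ℝ, IntegrableOn (fun y ↦ (s • (1 : E →L[ℝ] E) + fderiv ℝ h y).det)
      (tsupport h) μ := fun s ↦ by
    have hcont : Continuous fun y ↦ (s • (1 : E →L[ℝ] E) + fderiv ℝ h y).det :=
      ContinuousLinearMap.continuous_det.comp
        (continuous_const.add (hh.continuous_fderiv one_ne_zero))
    exact hcont.continuousOn.integrableOn_compact hc
  have hextrapolate := integral_polynomial_eval_eq (ν := μ.restrict (tsupport h))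
    (p := fun y ↦ (-(fderiv ℝ h y : E →ₗ[ℝ] E)).charpoly)
    (q := Polynomial.X ^ Module.finrank ℝ E * Polynomial.C (μ.real (tsupport h)))
    (N := Module.finrank ℝ E + 1) (S := L + 1) (t := 0)
    (fun y ↦ ?_) ?_ ?_ fun s hs ↦ ?_
  · simpa [eval_charpoly_neg, setIntegral_eq_integral_of_forall_compl_eq_zero hzero,
      Module.finrank_pos.ne'] using hextrapolate
  · rw [Polynomial.degree_eq_natDegree (LinearMap.charpoly_monic _).ne_zero,
      LinearMap.charpoly_natDegree]
    exact_mod_cast Nat.lt_succ_self _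
  · rw [mul_comm]
    exact (Polynomial.degree_C_mul_X_pow_le _ _).trans_lt (by exact_mod_cast Nat.lt_succ_self _)
  · simpa only [eval_charpoly_neg, IntegrableOn] using hint
  · simpa only [eval_charpoly_neg, Polynomial.eval_mul, Polynomial.eval_pow, Polynomial.eval_X,
      Polynomial.eval_C] using setIntegral_det_smul_one_add_fderiv μ
        (isClosed_tsupport h).measurableSet hd
        (fun _ hy ↦ image_eq_zero_of_notMem_tsupport hy) hL (by linarith [hs])

end NullLagrangian

lemma exists_contDiff_hasCompactSupport_eventuallyEq {E F : Type*} [NormedAddCommGroup E]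
    [NormedSpace ℝ E] [FiniteDimensional ℝ E] [NormedAddCommGroup F] [NormedSpace ℝ F] {m : ℕ∞}
    {K Ω : Set E} (hK : IsCompact K) (hΩ : IsOpen Ω) (hKΩ : K ⊆ Ω) {f : E → F}
    (hf : ∀ y ∈ Ω, ContDiffAt ℝ m f y) :
    ∃ G : E → F, ContDiff ℝ m G ∧ HasCompactSupport G ∧ ∀ᶠ y in 𝓝ˢ K, G y = f y := by
  obtain ⟨K', hK', hKK', hK'Ω⟩ := exists_compact_between hK hΩ hKΩ
  obtain ⟨χ, hχ_one, hχ_zero, -⟩ := exists_contMDiffMap_one_nhds_of_subset_interior (n := m)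
    (modelWithCornersSelf ℝ E) hK.isClosed hKK'
  have hχ : ContDiff ℝ m χ := χ.contMDiff.contDiff
  have htsupport : tsupport (fun y ↦ χ y • f y) ⊆ K' :=
    closure_minimal (fun y hy ↦ by_contra fun hyK ↦ hy (by simp [hχ_zero y hyK])) hK'.isClosed
  refine ⟨fun y ↦ χ y • f y, ?_, hK'.of_isClosed_subset (isClosed_tsupport _) htsupport, ?_⟩
  · exact (contMDiff_of_tsupport fun y hy ↦
      (hχ.contDiffAt.smul (hf y (hK'Ω (htsupport hy)))).contMDiffAt).contDiff
  · filter_upwards [hχ_one] with y hy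
    simp [hy]

-- The identity is clear for invertible `A`, and `A + t • 1` is invertible for small `t ≠ 0`.
lemma det_add_vecMulVec {m 𝕜 : Type*} [Fintype m] [DecidableEq m] [NontriviallyNormedField 𝕜]
    (A : Matrix m m 𝕜) (u v : m → 𝕜) :
    (A + vecMulVec u v).det = A.det + v ⬝ᵥ (A.adjugate *ᵥ u) := by
  have hinvertible : ∀ {B : Matrix m m 𝕜}, IsUnit B.det →
      (B + vecMulVec u v).det = B.det + v ⬝ᵥ (B.adjugate *ᵥ u) := fun {B} hB ↦ by
    rw [vecMulVec_eq Unit, det_add_replicateCol_mul_replicateRow hB, det_unique (n := Unit),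
      Matrix.add_apply, one_apply_eq, Matrix.inv_def, Ring.inverse_eq_inv, Matrix.mul_smul,
      Matrix.smul_mul, Matrix.mul_assoc, Matrix.smul_apply, smul_eq_mul, mul_add, mul_one,
      mul_inv_cancel_left₀ hB.ne_zero]
    rfl
  have hcurve : Continuous fun t : 𝕜 ↦ A + t • (1 : Matrix m m 𝕜) := by fun_prop
  have hunit : ∀ᶠ t in 𝓝[≠] (0 : 𝕜), IsUnit (A + t • (1 : Matrix m m 𝕜)).det := by
    filter_upwards [nhdsNE_le_cofinite _
      ((-A).charpoly.finite_setOfPred_isRoot (charpoly_monic _).ne_zero).compl_mem_cofinite]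
      with t ht
    rw [isUnit_iff_ne_zero]
    simpa [Polynomial.IsRoot, Matrix.eval_charpoly, Matrix.smul_one_eq_diagonal, add_comm]
      using ht
  refine tendsto_nhds_unique_of_eventuallyEq (l := 𝓝[≠] (0 : 𝕜))
    (f := fun t ↦ (A + t • (1 : Matrix m m 𝕜) + vecMulVec u v).det)
    (g := fun t ↦ (A + t • (1 : Matrix m m 𝕜)).det +
      v ⬝ᵥ ((A + t • (1 : Matrix m m 𝕜)).adjugate *ᵥ u)) ?_ ?_ (hunit.mono fun t ↦ hinvertible)
  · simpa using ((hcurve.add continuous_const).matrix_det.tendsto 0).mono_left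
      (nhdsWithin_le_nhds (s := {0}ᶜ))
  · have hcont : Continuous fun t : 𝕜 ↦ (A + t • (1 : Matrix m m 𝕜)).det +
        v ⬝ᵥ ((A + t • (1 : Matrix m m 𝕜)).adjugate *ᵥ u) :=
      hcurve.matrix_det.add (continuous_const.dotProduct
        (hcurve.matrix_adjugate.matrix_mulVec continuous_const))
    simpa using (hcont.tendsto 0).mono_left (nhdsWithin_le_nhds (s := {0}ᶜ))

section Cofactors

local notation "𝔼" => EuclideanSpace ℝ (Fin n)

/-- The adjugate of the differential `Df(y)`, that is the transpose of the cofactor matrix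
`D^♯f(y)`, as an operator on Euclidean space. -/
def adjDeriv (f : 𝔼 → 𝔼) (y : 𝔼) : 𝔼 →L[ℝ] 𝔼 :=
  toEuclideanCLM (𝕜 := ℝ) (diffMatrix f y).adjugate

variable {f : EuclideanSpace ℝ (Fin n) → EuclideanSpace ℝ (Fin n)}

lemma toEuclideanCLM_diffMatrix (f : 𝔼 → 𝔼) (y : 𝔼) :
    toEuclideanCLM (𝕜 := ℝ) (diffMatrix f y) = fderiv ℝ f y := by
  refine ContinuousLinearMap.coe_injective ((EuclideanSpace.basisFun (Fin n) ℝ).toBasis.ext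
    fun j ↦ ?_)
  ext i
  simp [diffMatrix, Matrix.ofLp_toEuclideanCLM]

lemma diffMatrix_congr {g : 𝔼 → 𝔼} {y : 𝔼} (h : f =ᶠ[𝓝 y] g) :
    diffMatrix f y = diffMatrix g y := by
  ext i j
  simp only [diffMatrix, h.fderiv_eq]

lemma jacDet_eq_det_fderiv (f : 𝔼 → 𝔼) (y : 𝔼) : jacDet f y = (fderiv ℝ f y).det := by
  rw [← toEuclideanCLM_diffMatrix, ContinuousLinearMap.det, coe_toEuclideanCLM_eq_toEuclideanLin,
    toEuclideanLin_eq_toLin_orthonormal, LinearMap.det_toLin, jacDet]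

lemma continuous_diffMatrix (hf : ContDiff ℝ 1 f) : Continuous (diffMatrix f) := by
  have := hf.continuous_fderiv one_ne_zero
  exact continuous_matrix fun i j ↦ by unfold diffMatrix; fun_prop

lemma continuous_jacDet (hf : ContDiff ℝ 1 f) : Continuous (jacDet f) :=
  (continuous_diffMatrix hf).matrix_det

lemma continuous_adjDeriv_apply (hf : ContDiff ℝ 1 f) (e : 𝔼) :
    Continuous fun y ↦ adjDeriv f y e :=
  (PiLp.continuous_toLp 2 _).comp
    ((continuous_diffMatrix hf).matrix_adjugate.matrix_mulVec continuous_const)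

lemma cofNorm_nonneg (f : 𝔼 → 𝔼) (y : 𝔼) : 0 ≤ cofNorm f y := Real.sqrt_nonneg _

lemma continuous_cofNorm (hf : ContDiff ℝ 1 f) : Continuous (cofNorm f) :=
  Real.continuous_sqrt.comp <| continuous_finsetSum _ fun i _ ↦ continuous_finsetSum _ fun j _ ↦
    (((continuous_diffMatrix hf).matrix_adjugate.matrix_transpose).matrix_elem i j).pow 2

lemma norm_toEuclideanCLM_apply_le {m : Type*} [Fintype m] [DecidableEq m] (M : Matrix m m ℝ)
    (e : EuclideanSpace ℝ m) :
    ‖toEuclideanCLM (𝕜 := ℝ) M e‖ ≤ √(∑ i, ∑ j, M i j ^ 2) * ‖e‖ := by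
  rw [EuclideanSpace.norm_eq, EuclideanSpace.norm_eq, ← Real.sqrt_mul (by positivity)]
  refine Real.sqrt_le_sqrt ?_
  simp_rw [Real.norm_eq_abs, sq_abs]
  rw [Finset.sum_mul]
  exact Finset.sum_le_sum fun i _ ↦ Finset.sum_mul_sq_le_sq_mul_sq .univ (M i) e

lemma norm_adjDeriv_apply_le (f : 𝔼 → 𝔼) (y e : 𝔼) :
    ‖adjDeriv f y e‖ ≤ cofNorm f y * ‖e‖ := by
  refine (norm_toEuclideanCLM_apply_le _ e).trans_eq ?_
  rw [cofNorm, Finset.sum_comm]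
  rfl

lemma abs_apply_adjDeriv_le (L : 𝔼 →L[ℝ] ℝ) (f : 𝔼 → 𝔼) (y e : 𝔼) :
    |L (adjDeriv f y e)| ≤ ‖L‖ * (cofNorm f y * ‖e‖) :=
  L.le_opNorm_of_le (norm_adjDeriv_apply_le f y e)

lemma fderiv_adjDeriv_apply (f : 𝔼 → 𝔼) (y e : 𝔼) :
    fderiv ℝ f y (adjDeriv f y e) = jacDet f y • e := by
  rw [← toEuclideanCLM_diffMatrix, adjDeriv, ← mul_apply_eq_comp, ← map_mul,
    mul_adjugate, map_smul, map_one]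
  rfl

lemma apply_eq_sum_mul_single (L : 𝔼 →L[ℝ] ℝ) (v : 𝔼) :
    L v = ∑ j, L (EuclideanSpace.single j 1) * v j := by
  conv_lhs => rw [← (EuclideanSpace.basisFun (Fin n) ℝ).sum_repr v]
  simp [mul_comm]

lemma jacDet_add_smul {y : 𝔼} (hf : DifferentiableAt ℝ f y) {w : 𝔼 → ℝ}
    (hw : DifferentiableAt ℝ w y) (e : 𝔼) :
    jacDet (fun y ↦ f y + w y • e) y = jacDet f y + fderiv ℝ w y (adjDeriv f y e) := by
  have hmatrix : diffMatrix (fun y ↦ f y + w y • e) y =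
      diffMatrix f y + vecMulVec e fun j ↦ fderiv ℝ w y (EuclideanSpace.single j 1) := by
    have hderiv : HasFDerivAt (fun y ↦ f y + w y • e) _ y :=
      hf.hasFDerivAt.add (hw.hasFDerivAt.smul_const e)
    ext i j
    simp [diffMatrix, hderiv.fderiv, vecMulVec_apply, mul_comm]
  rw [jacDet, hmatrix, det_add_vecMulVec, apply_eq_sum_mul_single]
  rfl

lemma integrable_jacDet [Nontrivial 𝔼] (hf : ContDiff ℝ 1 f) (hfc : HasCompactSupport f) :
    Integrable (jacDet f) := by
  refine (continuous_jacDet hf).integrable_of_hasCompactSupport ?_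
  have h0 : (0 : 𝔼 →L[ℝ] 𝔼).det = 0 := by
    rw [ContinuousLinearMap.det, ContinuousLinearMap.toLinearMap_zero, LinearMap.det_zero,
      zero_pow Module.finrank_pos.ne']
  rw [funext (jacDet_eq_det_fderiv f)]
  exact (hfc.fderiv ℝ).comp_left h0

/-- The weak Piola identity. -/
theorem integral_fderiv_adjDeriv_eq_zero (hf : ContDiff ℝ 1 f) {w : 𝔼 → ℝ}
    (hw : ContDiff ℝ 1 w) (hwc : HasCompactSupport w) (e : 𝔼) :
    ∫ y, fderiv ℝ w y (adjDeriv f y e) = 0 := by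
  rcases subsingleton_or_nontrivial 𝔼 with h | h
  · simp [Subsingleton.elim e 0]
  obtain ⟨F, hF, hFc, hFf⟩ := exists_contDiff_hasCompactSupport_eventuallyEq (m := 1) hwc
    isOpen_univ (subset_univ _) fun y _ ↦ hf.contDiffAt
  have hdiff : ∀ y, fderiv ℝ w y (adjDeriv f y e) =
      jacDet (fun y ↦ F y + w y • e) y - jacDet F y := fun y ↦ by
    rw [jacDet_add_smul (hF.differentiable one_ne_zero y) (hw.differentiable one_ne_zero y),
      add_sub_cancel_left]
    by_cases hy : y ∈ tsupport w
    · have hFfy : F =ᶠ[𝓝 y] f := eventually_nhdsSet_iff_forall.mp hFf y hy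
      simp only [adjDeriv, diffMatrix_congr hFfy]
    · simp [image_eq_zero_of_notMem_tsupport fun hy' ↦ hy (tsupport_fderiv_subset ℝ hy')]
  have hFw : ContDiff ℝ 1 fun y ↦ F y + w y • e := hF.add (hw.smul contDiff_const)
  have hFwc : HasCompactSupport fun y ↦ F y + w y • e := hFc.add hwc.smul_right
  simp_rw [hdiff]
  rw [integral_sub (integrable_jacDet hFw hFwc) (integrable_jacDet hF hFc)]
  simp_rw [jacDet_eq_det_fderiv]
  rw [integral_det_fderiv_eq_zero _ hFw hFwc, integral_det_fderiv_eq_zero _ hF hFc, sub_zero]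

lemma integral_mul_fderiv_mul_jacDet (hf : ContDiff ℝ 1 f) {ψ Φ : 𝔼 → ℝ} (hψ : ContDiff ℝ 1 ψ)
    (hψc : HasCompactSupport ψ) (hΦ : ContDiff ℝ 1 Φ) (e : 𝔼) :
    ∫ y, ψ y * (fderiv ℝ Φ (f y) e * jacDet f y) =
      -∫ y, Φ (f y) * fderiv ℝ ψ y (adjDeriv f y e) := by
  have hproduct : ∀ y, fderiv ℝ (fun y ↦ ψ y * Φ (f y)) y (adjDeriv f y e) =
      ψ y * (fderiv ℝ Φ (f y) e * jacDet f y) + Φ (f y) * fderiv ℝ ψ y (adjDeriv f y e) :=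
    fun y ↦ by
      have hcomp := (hΦ.differentiable one_ne_zero (f y)).hasFDerivAt.comp y
        (hf.differentiable one_ne_zero y).hasFDerivAt
      have hmul := ((hψ.differentiable one_ne_zero y).hasFDerivAt.mul hcomp).fderiv
      simp only [Function.comp_def] at hmul
      rw [show (fun y ↦ ψ y * Φ (f y)) = ψ * fun y ↦ Φ (f y) from rfl, hmul]
      simp [fderiv_adjDeriv_apply, mul_comm]
  have hadj := continuous_adjDeriv_apply hf e
  have hJ := continuous_jacDet hf
  have hint₁ : Integrable fun y ↦ ψ y * (fderiv ℝ Φ (f y) e * jacDet f y) :=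
    Continuous.integrable_of_hasCompactSupport (by fun_prop) hψc.mul_right
  have hint₂ : Integrable fun y ↦ Φ (f y) * fderiv ℝ ψ y (adjDeriv f y e) :=
    Continuous.integrable_of_hasCompactSupport (by fun_prop) <|
      (hψc.fderiv ℝ).mono fun y hy h0 ↦ hy (by simp [h0])
  rw [eq_neg_iff_add_eq_zero, ← integral_add hint₁ hint₂]
  simp_rw [← hproduct]
  exact integral_fderiv_adjDeriv_eq_zero hf (hψ.mul (hΦ.comp hf)) hψc.mul_right e

end Cofactors

section Shell

variable {E : Type*} [NormedAddCommGroup E]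

/-- The closed spherical shell of thickness `δ` inside the sphere of center `x` and radius `r`. -/
def shell (x : E) (r δ : ℝ) : Set E := {y | r - δ ≤ ‖y - x‖ ∧ ‖y - x‖ ≤ r}

lemma isClosed_shell (x : E) (r δ : ℝ) : IsClosed (shell x r δ) := by
  have hnorm : Continuous fun y : E ↦ ‖y - x‖ := by fun_prop
  exact (isClosed_le continuous_const hnorm).inter (isClosed_le hnorm continuous_const)

variable [NormedSpace ℝ E]

/-- The radial projection onto the sphere of center `x` and radius `r`; it sends `x` to itself. -/
def radProj (x : E) (r : ℝ) (y : E) : E := x + (r / ‖y - x‖) • (y - x)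

variable {x y : E} {r δ d : ℝ}

lemma radProj_mem_sphere (hδr : δ < r) (hr : 0 < r) (hy : y ∈ shell x r δ) :
    radProj x r y ∈ sphere x r := by
  have h0 : 0 < ‖y - x‖ := by linarith [hy.1]
  rw [mem_sphere, dist_eq_norm, radProj, add_sub_cancel_left, norm_smul, Real.norm_eq_abs,
    abs_of_pos (div_pos hr h0), div_mul_cancel₀ _ h0.ne']

lemma lineMap_radProj (hδr : δ < r) (hr : 0 < r) (hy : y ∈ shell x r δ) :
    AffineMap.lineMap x (radProj x r y) (‖y - x‖ / r) = y := by
  have h0 : 0 < ‖y - x‖ := by linarith [hy.1]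
  rw [AffineMap.lineMap_apply_module', radProj, add_sub_cancel_left, smul_smul,
    div_mul_div_cancel₀ hr.ne', div_self h0.ne', one_smul, sub_add_cancel]

lemma dist_lineMap_lineMap_le (x p a : E) (s t : ℝ) :
    dist (AffineMap.lineMap x p s) (AffineMap.lineMap x a t) ≤
      |s| * dist p a + |s - t| * dist x a := by
  refine (dist_triangle _ (AffineMap.lineMap x a s) _).trans_eq ?_
  rw [dist_lineMap_lineMap, Real.dist_eq, dist_eq_norm, dist_eq_norm p,
    AffineMap.lineMap_apply_module', AffineMap.lineMap_apply_module', add_sub_add_right_eq_sub,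
    ← smul_sub, sub_sub_sub_cancel_right, norm_smul, Real.norm_eq_abs]

lemma dist_radProj_le (hδr : δ < r) (hr : 0 < r) (hy : y ∈ shell x r δ) :
    dist y (radProj x r y) ≤ δ := by
  have hle := dist_lineMap_lineMap_le x (radProj x r y) (radProj x r y) (‖y - x‖ / r) 1
  rw [lineMap_radProj hδr hr hy, AffineMap.lineMap_apply_one, dist_self, mul_zero, zero_add,
    dist_comm x, radProj_mem_sphere hδr hr hy] at hle
  refine hle.trans ?_
  rw [div_sub_one hr.ne', abs_div, abs_of_pos hr, div_mul_cancel₀ _ hr.ne', abs_le]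
  constructor <;> linarith [hy.1, hy.2]

-- A shell over a cap of diameter `d` is cut into about `δ / d` slices of diameter `≲ d`.
lemma shell_inter_preimage_radProj_subset (hδ : 0 < δ) (hδr : δ < r) (hd : 0 < d) {A : Set E}
    (hA : ∀ p ∈ A, ∀ q ∈ A, dist p q ≤ d) :
    ∃ c : ℕ → E, shell x r δ ∩ radProj x r ⁻¹' A ⊆
      ⋃ k ∈ Finset.range (⌊δ / d⌋₊ + 1), closedBall (c k) (2 * d) := by
  rcases (shell x r δ ∩ radProj x r ⁻¹' A).eq_empty_or_nonempty with h | ⟨z, hz, hzA⟩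
  · exact ⟨0, h ▸ empty_subset _⟩
  have hr : 0 < r := hδ.trans hδr
  refine ⟨fun k ↦ AffineMap.lineMap x (radProj x r z) ((r - k * d) / r), fun y ⟨hy, hyA⟩ ↦ ?_⟩
  set t := ‖y - x‖
  have hnonneg : 0 ≤ (r - t) / d := div_nonneg (by linarith [hy.2]) hd.le
  have hfloor_le := (le_div_iff₀ hd).mp (Nat.floor_le hnonneg)
  have hlt_floor := (div_lt_iff₀ hd).mp (Nat.lt_floor_add_one ((r - t) / d))
  set k := ⌊(r - t) / d⌋₊
  refine mem_biUnion (x := k) ?_ ?_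
  · rw [Finset.mem_coe, Finset.mem_range, Nat.lt_succ_iff]
    exact Nat.floor_le_floor (by gcongr; linarith [hy.1])
  rw [mem_closedBall, ← lineMap_radProj hδr hr hy]
  refine (dist_lineMap_lineMap_le _ _ _ _ _).trans ?_
  have hradial : |t / r - (r - k * d) / r| * dist x (radProj x r z) ≤ d := by
    rw [dist_comm, radProj_mem_sphere hδr hr hz, ← sub_div, abs_div, abs_of_pos hr,
      div_mul_cancel₀ _ hr.ne', abs_le]
    constructor <;> linarith
  have htangential : |t / r| * dist (radProj x r y) (radProj x r z) ≤ 1 * d := by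
    refine mul_le_mul ?_ (hA _ hyA _ hzA) dist_nonneg zero_le_one
    rw [abs_of_nonneg (by positivity), div_le_one hr]
    exact hy.2
  linarith

lemma measurable_radProj [MeasurableSpace E] [BorelSpace E] [SecondCountableTopology E] (x : E)
    (r : ℝ) : Measurable (radProj x r) := by
  unfold radProj
  fun_prop

variable [MeasurableSpace E] (μ : Measure E)

/-- A dimensional constant comparing the measure of a thin shell with the Hausdorff measure of the
sphere it surrounds. -/
def shellConst : ℝ≥0∞ := 2 ^ (Module.finrank ℝ E + 1) * μ (ball 0 1)

lemma shellConst_ne_zero [μ.IsOpenPosMeasure] : shellConst μ ≠ 0 :=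
  mul_ne_zero (by positivity) (measure_ball_pos μ _ one_pos).ne'

variable [FiniteDimensional ℝ E]

lemma shellConst_ne_top [IsFiniteMeasureOnCompacts μ] : shellConst μ ≠ ∞ :=
  ENNReal.mul_ne_top (by finiteness) measure_ball_lt_top.ne

variable [BorelSpace E] [μ.IsAddHaarMeasure]

lemma addHaar_shell_inter_preimage_radProj_le (hδ : 0 < δ) (hδr : δ < r) (hd : 0 < d)
    (hdδ : d ≤ δ) {A : Set E} (hA : ∀ p ∈ A, ∀ q ∈ A, dist p q ≤ d) :
    μ (shell x r δ ∩ radProj x r ⁻¹' A) ≤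
      shellConst μ * ENNReal.ofReal δ * ENNReal.ofReal d ^ ((Module.finrank ℝ E : ℝ) - 1) := by
  obtain ⟨c, hc⟩ := shell_inter_preimage_radProj_subset (x := x) hδ hδr hd hA
  set m := Module.finrank ℝ E
  set N := ⌊δ / d⌋₊ + 1 with hN
  have hN_le : (N : ℝ) ≤ 2 * (δ / d) := by
    have hfloor : (⌊δ / d⌋₊ : ℝ) ≤ δ / d := Nat.floor_le (by positivity)
    have hone : 1 ≤ δ / d := by rwa [one_le_div hd]
    push_cast [hN]
    linarith
  have hcount : N * (2 * d) ^ m ≤ 2 ^ (m + 1) * (δ * d ^ ((m : ℝ) - 1)) :=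
    calc N * (2 * d) ^ m ≤ 2 * (δ / d) * (2 * d) ^ m := by gcongr
      _ = 2 ^ (m + 1) * (δ * d ^ ((m : ℝ) - 1)) := by
        rw [Real.rpow_sub_one hd.ne', Real.rpow_natCast]
        ring
  calc μ (shell x r δ ∩ radProj x r ⁻¹' A)
      ≤ ∑ k ∈ Finset.range N, μ (closedBall (c k) (2 * d)) :=
        (measure_mono hc).trans (measure_biUnion_finset_le _ _)
    _ = ENNReal.ofReal (N * (2 * d) ^ m) * μ (ball 0 1) := by
        simp_rw [Measure.addHaar_closedBall μ _ (show (0 : ℝ) ≤ 2 * d by positivity)]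
        rw [Finset.sum_const, Finset.card_range, nsmul_eq_mul, ← mul_assoc,
          ENNReal.ofReal_mul (by positivity), ENNReal.ofReal_natCast]
    _ ≤ ENNReal.ofReal (2 ^ (m + 1) * (δ * d ^ ((m : ℝ) - 1))) * μ (ball 0 1) := by gcongr
    _ = _ := by
        rw [ENNReal.ofReal_mul (by positivity), ENNReal.ofReal_mul hδ.le,
          ENNReal.ofReal_rpow_of_pos hd, ENNReal.ofReal_pow zero_le_two, ENNReal.ofReal_ofNat,
          shellConst]
        ring

theorem map_radProj_restrict_shell_le (hδ : 0 < δ) (hδr : δ < r) :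
    (μ.restrict (shell x r δ)).map (radProj x r) ≤
      (shellConst μ * ENNReal.ofReal δ) • μH[(Module.finrank ℝ E : ℝ) - 1] := by
  set c := shellConst μ * ENNReal.ofReal δ
  have hc0 : c ≠ 0 := mul_ne_zero (shellConst_ne_zero μ) (by simpa using hδ)
  have hctop : c ≠ ∞ := ENNReal.mul_ne_top (shellConst_ne_top μ) ENNReal.ofReal_ne_top
  set ν := (μ.restrict (shell x r δ)).map (radProj x r)
  have hsmall : ∀ (s : Set E) (D : ℝ≥0∞), ediam s < D → D < ENNReal.ofReal δ →
      ν s ≤ c * D ^ ((Module.finrank ℝ E : ℝ) - 1) := fun s D hsD hDδ ↦ by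
    have hDtop : D ≠ ∞ := hDδ.ne_top
    have hdist : ∀ p ∈ closure s, ∀ q ∈ closure s, dist p q ≤ D.toReal := fun p hp q hq ↦ by
      rw [dist_edist]
      exact ENNReal.toReal_mono hDtop
        ((edist_le_ediam_of_mem hp hq).trans (ediam_closure s ▸ hsD.le))
    have hbound := addHaar_shell_inter_preimage_radProj_le (x := x) μ hδ hδr
      (ENNReal.toReal_pos (pos_of_gt hsD).ne' hDtop)
      (ENNReal.toReal_le_of_le_ofReal hδ.le hDδ.le) hdist
    rw [ENNReal.ofReal_toReal hDtop] at hbound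
    refine (measure_mono subset_closure).trans (le_trans (le_of_eq ?_) hbound)
    rw [Measure.map_apply (measurable_radProj x r) isClosed_closure.measurableSet,
      Measure.restrict_apply (measurable_radProj x r isClosed_closure.measurableSet), inter_comm]
  have hle : c⁻¹ • ν ≤ μH[(Module.finrank ℝ E : ℝ) - 1] := by
    refine Measure.le_hausdorffMeasure _ _ (ENNReal.ofReal (δ / 2)) (by simpa using hδ)
      fun s hs ↦ ?_
    have hsδ : ediam s < ENNReal.ofReal δ :=
      hs.trans_lt ((ENNReal.ofReal_lt_ofReal_iff hδ).mpr (half_lt_self hδ))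
    have : (𝓝[>] ediam s).NeBot := nhdsGT_neBot_of_exists_gt ⟨_, hsδ⟩
    rw [Measure.smul_apply, smul_eq_mul, ENNReal.inv_mul_le_iff hc0 hctop]
    have hlim := ENNReal.Tendsto.const_mul ((ENNReal.continuous_rpow_const
      (y := (Module.finrank ℝ E : ℝ) - 1)).tendsto (ediam s)) (.inr hctop)
    refine ge_of_tendsto (hlim.mono_left (nhdsWithin_le_nhds (s := Ioi (ediam s)))) ?_
    filter_upwards [Ioo_mem_nhdsGT hsδ] with D hD using hsmall s D hD.1 hD.2
  refine Measure.le_iff.mpr fun s _ ↦ ?_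
  have hs := hle s
  rwa [Measure.smul_apply, smul_eq_mul, ENNReal.inv_mul_le_iff hc0 hctop] at hs

lemma setLIntegral_shell_comp_radProj_le (hδ : 0 < δ) (hδr : δ < r) {g : E → ℝ≥0∞}
    (hg : Measurable g) :
    ∫⁻ y in shell x r δ, g (radProj x r y) ∂μ ≤
      shellConst μ * ENNReal.ofReal δ *
        ∫⁻ y in sphere x r, g y ∂μH[(Module.finrank ℝ E : ℝ) - 1] := by
  have hmem : ∀ᵐ y ∂(μ.restrict (shell x r δ)).map (radProj x r), y ∈ sphere x r := by
    refine (ae_map_iff (measurable_radProj x r).aemeasurable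
      isClosed_sphere.measurableSet).mpr ?_
    filter_upwards [ae_restrict_mem (isClosed_shell x r δ).measurableSet] with y hy
      using radProj_mem_sphere hδr (hδ.trans hδr) hy
  rw [← lintegral_map hg (measurable_radProj x r), ← smul_eq_mul, ← lintegral_smul_measure,
    ← Measure.restrict_smul, ← Measure.restrict_eq_self_of_ae_mem hmem]
  exact lintegral_mono' (Measure.restrict_mono le_rfl
    (map_radProj_restrict_shell_le μ hδ hδr)) le_rfl

end Shell

section SphereMeasure

variable {E : Type*} [NormedAddCommGroup E] [InnerProductSpace ℝ E]

lemma norm_stereoToFun_le {v x : E} (hx : ‖x‖ = 1) (hvx : inner ℝ v x ≤ 0) :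
    ‖stereoToFun v x‖ ≤ 2 := by
  have hproj := (ℝ ∙ v)ᗮ.norm_orthogonalProjectionOnto_apply_le x
  have hcoef : 2 / (1 - inner ℝ v x) ≤ 2 := div_le_self zero_le_two (by linarith)
  rw [stereoToFun_apply, norm_smul, innerSL_apply_apply, Real.norm_eq_abs,
    abs_of_nonneg (div_nonneg zero_le_two (by linarith))]
  calc _ ≤ 2 * 1 := mul_le_mul hcoef (hx ▸ hproj) (norm_nonneg _) zero_le_two
    _ = 2 := mul_one 2

lemma hemisphere_subset_image_stereoInvFunAux {v : E} (hv : ‖v‖ = 1) :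
    sphere 0 1 ∩ {x | inner ℝ v x ≤ 0} ⊆
      (fun w : (ℝ ∙ v)ᗮ ↦ stereoInvFunAux v (w : E)) '' closedBall 0 2 := fun x ⟨hx, hvx⟩ ↦ by
  have hne : x ≠ v := by
    rintro rfl
    rw [mem_ofPred_eq, real_inner_self_eq_norm_sq, hv] at hvx
    norm_num at hvx
  exact ⟨stereoToFun v x,
    mem_closedBall_zero_iff.mpr (norm_stereoToFun_le (mem_sphere_zero_iff_norm.mp hx) hvx),
    congrArg Subtype.val (stereo_left_inv hv (x := ⟨x, hx⟩) hne)⟩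

variable [FiniteDimensional ℝ E] [MeasurableSpace E] [BorelSpace E]

lemma hausdorffMeasure_hemisphere_lt_top {v : E} (hv : ‖v‖ = 1) :
    μH[(Module.finrank ℝ E : ℝ) - 1] (sphere 0 1 ∩ {x | inner ℝ v x ≤ 0}) < ∞ := by
  have hv0 : v ≠ 0 := by
    rintro rfl
    simp at hv
  have : Nontrivial E := nontrivial_of_ne v 0 hv0
  have : Fact (Module.finrank ℝ E = (Module.finrank ℝ E - 1) + 1) :=
    ⟨(Nat.sub_add_cancel Module.finrank_pos).symm⟩
  have hdim : (Module.finrank ℝ E : ℝ) - 1 = Module.finrank ℝ (ℝ ∙ v)ᗮ := by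
    rw [Submodule.finrank_orthogonal_span_singleton (n := Module.finrank ℝ E - 1) hv0,
      Nat.cast_pred Module.finrank_pos]
  have hsmooth : ContDiff ℝ 1 fun w : (ℝ ∙ v)ᗮ ↦ stereoInvFunAux v (w : E) :=
    contDiff_stereoInvFunAux.comp (ℝ ∙ v)ᗮ.subtypeL.contDiff
  obtain ⟨K, hK⟩ := hsmooth.contDiffOn.exists_lipschitzOnWith one_ne_zero
    (convex_closedBall 0 2) (isCompact_closedBall 0 2)
  rw [hdim]
  refine (measure_mono (hemisphere_subset_image_stereoInvFunAux hv)).trans_lt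
    ((hK.hausdorffMeasure_image_le (Nat.cast_nonneg _)).trans_lt ?_)
  exact ENNReal.mul_lt_top (by finiteness) measure_closedBall_lt_top

variable [Nontrivial E]

lemma hausdorffMeasure_unitSphere_lt_top :
    μH[(Module.finrank ℝ E : ℝ) - 1] (sphere (0 : E) 1) < ∞ := by
  obtain ⟨v, hv⟩ := exists_norm_eq E zero_le_one
  have hcover : sphere (0 : E) 1 ⊆
      (sphere 0 1 ∩ {x | inner ℝ v x ≤ 0}) ∪ (sphere 0 1 ∩ {x | inner ℝ (-v) x ≤ 0}) :=
    fun x hx ↦ (le_total (inner ℝ v x) 0).imp (⟨hx, ·⟩) (⟨hx, by simpa [inner_neg_left] using ·⟩)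
  exact (measure_mono hcover).trans_lt (measure_union_lt_top
    (hausdorffMeasure_hemisphere_lt_top hv)
    (hausdorffMeasure_hemisphere_lt_top ((norm_neg v).trans hv)))

lemma hausdorffMeasure_sphere (x : E) {r : ℝ} (hr : 0 < r) :
    μH[(Module.finrank ℝ E : ℝ) - 1] (sphere x r) =
      ENNReal.ofReal (r ^ ((Module.finrank ℝ E : ℝ) - 1)) *
        μH[(Module.finrank ℝ E : ℝ) - 1] (sphere (0 : E) 1) := by
  have hd : (0 : ℝ) ≤ Module.finrank ℝ E - 1 :=
    sub_nonneg.mpr (by exact_mod_cast (Module.finrank_pos : 0 < Module.finrank ℝ E))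
  have hscale : sphere x r = x +ᵥ r • sphere (0 : E) 1 := by
    rw [_root_.smul_sphere r 0 zero_le_one, smul_zero, mul_one, Real.norm_of_nonneg hr.le,
      vadd_sphere_zero]
  rw [hscale, hausdorffMeasure_vadd x (.inl hd), Measure.hausdorffMeasure_smul₀ hd hr.ne',
    ENNReal.smul_def, smul_eq_mul, ENNReal.coe_rpow_of_nonneg _ hd, ← enorm_eq_nnnorm,
    Real.enorm_of_nonneg hr.le, ENNReal.ofReal_rpow_of_pos hr]

lemma hausdorffMeasure_sphere_lt_top (x : E) {r : ℝ} (hr : 0 < r) :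
    μH[(Module.finrank ℝ E : ℝ) - 1] (sphere x r) < ∞ := by
  rw [hausdorffMeasure_sphere x hr]
  exact ENNReal.mul_lt_top ENNReal.ofReal_lt_top hausdorffMeasure_unitSphere_lt_top

lemma hausdorffMeasure_real_sphere (x : E) {r : ℝ} (hr : 0 < r) :
    (μH[(Module.finrank ℝ E : ℝ) - 1]).real (sphere x r) =
      r ^ ((Module.finrank ℝ E : ℝ) - 1) *
        (μH[(Module.finrank ℝ E : ℝ) - 1]).real (sphere (0 : E) 1) := by
  rw [measureReal_def, hausdorffMeasure_sphere x hr, ENNReal.toReal_mul,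
    ENNReal.toReal_ofReal (by positivity), measureReal_def]

lemma setIntegral_sphere_eq_smul_setAverage {F : Type*} [NormedAddCommGroup F] [NormedSpace ℝ F]
    (g : E → F) (x : E) {r : ℝ} (hr : 0 < r) :
    ∫ y in sphere x r, g y ∂μH[(Module.finrank ℝ E : ℝ) - 1] =
      (r ^ ((Module.finrank ℝ E : ℝ) - 1) *
        (μH[(Module.finrank ℝ E : ℝ) - 1]).real (sphere (0 : E) 1)) •
        ⨍ y in sphere x r, g y ∂μH[(Module.finrank ℝ E : ℝ) - 1] := by
  rw [← hausdorffMeasure_real_sphere x hr,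
    measure_smul_setAverage _ (hausdorffMeasure_sphere_lt_top x hr).ne]

lemma integrableOn_sphere_of_continuous {g : E → ℝ} (hg : Continuous g) (x : E) {r : ℝ}
    (hr : 0 < r) : IntegrableOn g (sphere x r) μH[(Module.finrank ℝ E : ℝ) - 1] := by
  obtain ⟨M, hM⟩ := (isCompact_sphere x r).exists_bound_of_continuousOn hg.continuousOn
  exact .of_bound (hausdorffMeasure_sphere_lt_top x hr) hg.aestronglyMeasurable M
    ((ae_restrict_mem isClosed_sphere.measurableSet).mono hM)

end SphereMeasure

section RadialCutoff

lemma exists_lipschitzWith_smoothTransition :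
    ∃ K : ℝ≥0, LipschitzWith K Real.smoothTransition := by
  obtain ⟨K, hK⟩ := (Real.smoothTransition.contDiff (n := 1)).contDiffOn.exists_lipschitzOnWith
    one_ne_zero (convex_Icc (0 : ℝ) 1) isCompact_Icc
  refine ⟨K, .of_dist_le_mul fun a b ↦ ?_⟩
  rw [← Real.smoothTransition.projIcc (x := a), ← Real.smoothTransition.projIcc (x := b)]
  refine (hK.dist_le_mul _ (Subtype.coe_prop _) _ (Subtype.coe_prop _)).trans ?_
  gcongr
  have hproj := (LipschitzWith.projIcc (zero_le_one (α := ℝ))).dist_le_mul a b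
  rwa [NNReal.coe_one, one_mul] at hproj

variable {E : Type*} [NormedAddCommGroup E]

/-- A cutoff function equal to `1` on the ball of center `x` and radius `r - δ` and to `0` outside
the ball of radius `r`. -/
def radialCutoff (x : E) (r δ : ℝ) (y : E) : ℝ := Real.smoothTransition ((r - ‖y - x‖) / δ)

variable {x y : E} {r δ : ℝ}

lemma radialCutoff_eq_zero (hδ : 0 < δ) (hy : r ≤ ‖y - x‖) : radialCutoff x r δ y = 0 :=
  Real.smoothTransition.zero_of_nonpos
    (div_nonpos_of_nonpos_of_nonneg (sub_nonpos.mpr hy) hδ.le)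

lemma radialCutoff_eq_one (hδ : 0 < δ) (hy : ‖y - x‖ ≤ r - δ) : radialCutoff x r δ y = 1 :=
  Real.smoothTransition.one_of_one_le (by rw [le_div_iff₀ hδ]; linarith)

lemma norm_radialCutoff_le_one (x : E) (r δ : ℝ) (y : E) : ‖radialCutoff x r δ y‖ ≤ 1 :=
  (Real.norm_of_nonneg (Real.smoothTransition.nonneg _)).trans_le (Real.smoothTransition.le_one _)

lemma continuous_radialCutoff (x : E) (r δ : ℝ) : Continuous (radialCutoff x r δ) :=
  Real.smoothTransition.continuous.comp (by fun_prop)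

lemma lipschitzWith_radialCutoff {K : ℝ≥0} (hK : LipschitzWith K Real.smoothTransition)
    (x : E) (r δ : ℝ) : LipschitzWith (K * ‖δ‖₊⁻¹) (radialCutoff x r δ) := by
  refine hK.comp (.of_dist_le_mul fun a b ↦ ?_)
  rw [Real.dist_eq, ← sub_div, _root_.sub_sub_sub_cancel_left, abs_div, div_eq_inv_mul,
    NNReal.coe_inv, coe_nnnorm, Real.norm_eq_abs, dist_comm, dist_eq_norm]
  gcongr
  simpa using abs_norm_sub_norm_le (b - x) (a - x)

lemma hasCompactSupport_radialCutoff [ProperSpace E] (x : E) (r : ℝ) (hδ : 0 < δ) :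
    HasCompactSupport (radialCutoff x r δ) :=
  .intro (isCompact_closedBall x r) fun y hy ↦ radialCutoff_eq_zero hδ <| by
    rw [mem_closedBall, dist_eq_norm, not_le] at hy
    exact hy.le

lemma fderiv_radialCutoff_eq_zero [NormedSpace ℝ E] (hδ : 0 < δ) (hy : y ∉ shell x r δ) :
    fderiv ℝ (radialCutoff x r δ) y = 0 := by
  have hnorm : Continuous fun y : E ↦ ‖y - x‖ := by fun_prop
  have hconst : ∃ c : ℝ, radialCutoff x r δ =ᶠ[𝓝 y] fun _ ↦ c := by
    rcases lt_or_ge ‖y - x‖ (r - δ) with hlt | hge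
    · exact ⟨1, (hnorm.continuousAt.eventually_lt_const hlt).mono fun z hz ↦
        radialCutoff_eq_one hδ hz.le⟩
    · exact ⟨0, (hnorm.continuousAt.eventually_const_lt
        (not_le.mp fun hle ↦ hy ⟨hge, hle⟩)).mono fun z hz ↦ radialCutoff_eq_zero hδ hz.le⟩
  obtain ⟨c, hc⟩ := hconst
  rw [hc.fderiv_eq, fderiv_fun_const, Pi.zero_apply]

lemma contDiff_radialCutoff {E : Type*} [NormedAddCommGroup E] [InnerProductSpace ℝ E] {m : ℕ∞}
    (x : E) (hδ : 0 < δ) (hδr : δ < r) : ContDiff ℝ m (radialCutoff x r δ) := by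
  refine contDiff_iff_contDiffAt.mpr fun y ↦ ?_
  rcases eq_or_ne y x with rfl | hy
  · refine (contDiffAt_const (c := 1)).congr_of_eventuallyEq ?_
    filter_upwards [ball_mem_nhds y (sub_pos.mpr hδr)] with z hz
    exact radialCutoff_eq_one hδ (mem_ball_iff_norm.mp hz).le
  · exact Real.smoothTransition.contDiff.contDiffAt.comp y ((contDiffAt_const.sub
      ((contDiffAt_id.sub contDiffAt_const).norm ℝ (sub_ne_zero.mpr hy))).div_const δ)

lemma tendsto_integral_radialCutoff_smul [MeasurableSpace E] [BorelSpace E] {μ : Measure E}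
    {F : Type*} [NormedAddCommGroup F] [NormedSpace ℝ F] {g : E → F}
    (hg : AEStronglyMeasurable g μ) (hgi : IntegrableOn g (ball x r) μ) :
    Tendsto (fun δ ↦ ∫ y, radialCutoff x r δ y • g y ∂μ) (𝓝[>] 0)
      (𝓝 (∫ y in ball x r, g y ∂μ)) := by
  rw [← integral_indicator measurableSet_ball]
  refine tendsto_integral_filter_of_dominated_convergence ((ball x r).indicator fun y ↦ ‖g y‖)
    (.of_forall fun δ ↦ (continuous_radialCutoff x r δ).aestronglyMeasurable.smul hg) ?_
    ((integrable_indicator_iff measurableSet_ball).mpr hgi.norm) (.of_forall fun y ↦ ?_)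
  · filter_upwards [self_mem_nhdsWithin] with δ hδ
    refine .of_forall fun y ↦ ?_
    by_cases hy : y ∈ ball x r
    · rw [indicator_of_mem hy, norm_smul]
      exact mul_le_of_le_one_left (norm_nonneg _) (norm_radialCutoff_le_one x r δ y)
    · rw [radialCutoff_eq_zero hδ (by simpa [dist_eq_norm] using hy), zero_smul, norm_zero,
        indicator_of_notMem hy]
  · refine tendsto_const_nhds.congr' ?_
    by_cases hy : y ∈ ball x r
    · have hlt : 0 < r - ‖y - x‖ := sub_pos.mpr (mem_ball_iff_norm.mp hy)
      filter_upwards [Ioo_mem_nhdsGT hlt] with δ hδ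
      rw [indicator_of_mem hy, radialCutoff_eq_one hδ.1 (by linarith [hδ.2]), one_smul]
    · filter_upwards [self_mem_nhdsWithin] with δ hδ
      rw [radialCutoff_eq_zero hδ (by simpa [dist_eq_norm] using hy), zero_smul,
        indicator_of_notMem hy]

lemma lintegral_mul_enorm_fderiv_radialCutoff_le [NormedSpace ℝ E] [FiniteDimensional ℝ E]
    [MeasurableSpace E] [BorelSpace E] (μ : Measure E) [μ.IsAddHaarMeasure] {K : ℝ≥0}
    (hK : LipschitzWith K Real.smoothTransition) (hδ : 0 < δ) (hδr : δ < r) {g G : E → ℝ≥0∞}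
    (hG : Measurable G) (hgG : ∀ y ∈ shell x r δ, g y ≤ G (radProj x r y)) :
    ∫⁻ y, g y * ‖fderiv ℝ (radialCutoff x r δ) y‖ₑ ∂μ ≤
      K * shellConst μ * ∫⁻ y in sphere x r, G y ∂μH[(Module.finrank ℝ E : ℝ) - 1] := by
  have hfderiv : ∀ y, ‖fderiv ℝ (radialCutoff x r δ) y‖ₑ ≤ K * (ENNReal.ofReal δ)⁻¹ := fun y ↦ by
    rw [← Real.enorm_of_nonneg hδ.le, enorm_eq_nnnorm δ,
      ← ENNReal.coe_inv (nnnorm_ne_zero_iff.mpr hδ.ne'), ← ENNReal.coe_mul, enorm_le_coe]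
    exact norm_fderiv_le_of_lipschitz ℝ (lipschitzWith_radialCutoff hK x r δ)
  have hδ0 : ENNReal.ofReal δ ≠ 0 := by simpa using hδ
  calc ∫⁻ y, g y * ‖fderiv ℝ (radialCutoff x r δ) y‖ₑ ∂μ
      = ∫⁻ y in shell x r δ, g y * ‖fderiv ℝ (radialCutoff x r δ) y‖ₑ ∂μ := by
        refine (setLIntegral_eq_of_support_subset fun y hy ↦ ?_).symm
        by_contra hshell
        exact hy (by simp [fderiv_radialCutoff_eq_zero hδ hshell, enorm_eq_nnnorm])
    _ ≤ ∫⁻ y in shell x r δ, K * (ENNReal.ofReal δ)⁻¹ * G (radProj x r y) ∂μ := by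
        refine setLIntegral_mono' (isClosed_shell x r δ).measurableSet fun y hy ↦ ?_
        rw [mul_comm]
        exact mul_le_mul' (hfderiv y) (hgG y hy)
    _ = K * (ENNReal.ofReal δ)⁻¹ * ∫⁻ y in shell x r δ, G (radProj x r y) ∂μ :=
        lintegral_const_mul _ (hG.comp (measurable_radProj x r))
    _ ≤ K * (ENNReal.ofReal δ)⁻¹ * (shellConst μ * ENNReal.ofReal δ *
          ∫⁻ y in sphere x r, G y ∂μH[(Module.finrank ℝ E : ℝ) - 1]) := by
        gcongr
        exact setLIntegral_shell_comp_radProj_le μ hδ hδr hG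
    _ = K * shellConst μ * ∫⁻ y in sphere x r, G y ∂μH[(Module.finrank ℝ E : ℝ) - 1] := by
        rw [mul_comm (shellConst μ), mul_assoc _ (shellConst μ), mul_assoc (K : ℝ≥0∞),
          ENNReal.inv_mul_cancel_left hδ0 ENNReal.ofReal_ne_top, mul_assoc]

lemma eventually_le_comp_radProj_add [NormedSpace ℝ E] [ProperSpace E] {g : E → ℝ}
    (hg : Continuous g) (x : E) (hr : 0 < r) {ε : ℝ} (hε : 0 < ε) :
    ∀ᶠ δ in 𝓝[>] 0, ∀ y ∈ shell x r δ, g y ≤ g (radProj x r y) + ε := by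
  obtain ⟨d, hd, hclose⟩ := Metric.uniformContinuousOn_iff.mp
    ((isCompact_closedBall x r).uniformContinuousOn_of_continuous hg.continuousOn) ε hε
  filter_upwards [Ioo_mem_nhdsGT (lt_min hd hr)] with δ ⟨_, hδ⟩ y hy
  have hδr := hδ.trans_le (min_le_right _ _)
  have hdist := hclose y (mem_closedBall_iff_norm.mpr hy.2) (radProj x r y)
    (sphere_subset_closedBall (radProj_mem_sphere hδr hr hy))
    ((dist_radProj_le hδr hr hy).trans_lt (hδ.trans_le (min_le_left _ _)))
  linarith [(abs_lt.mp (Real.dist_eq _ _ ▸ hdist)).2]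

lemma integral_mul_norm_fderiv_radialCutoff_le {E : Type*} [NormedAddCommGroup E]
    [InnerProductSpace ℝ E] [FiniteDimensional ℝ E] [Nontrivial E] [MeasurableSpace E]
    [BorelSpace E] (μ : Measure E) [μ.IsAddHaarMeasure] {K : ℝ≥0}
    (hK : LipschitzWith K Real.smoothTransition) {x : E} {r δ : ℝ} (hδ : 0 < δ) (hδr : δ < r)
    {g : E → ℝ} (hg : Continuous g) (hg0 : ∀ y, 0 ≤ g y) {ε : ℝ} (hε : 0 ≤ ε)
    (hshell : ∀ y ∈ shell x r δ, g y ≤ g (radProj x r y) + ε) :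
    ∫ y, g y * ‖fderiv ℝ (radialCutoff x r δ) y‖ ∂μ ≤
      (K * shellConst μ).toReal *
        (∫ y in sphere x r, g y ∂μH[(Module.finrank ℝ E : ℝ) - 1] +
          (μH[(Module.finrank ℝ E : ℝ) - 1]).real (sphere x r) * ε) := by
  have hr := hδ.trans hδr
  have : IsFiniteMeasure ((μH[(Module.finrank ℝ E : ℝ) - 1]).restrict (sphere x r)) :=
    isFiniteMeasure_restrict.mpr (hausdorffMeasure_sphere_lt_top x hr).ne
  have hgi := integrableOn_sphere_of_continuous hg x hr
  have hgεi : IntegrableOn (fun y ↦ g y + ε) (sphere x r) μH[(Module.finrank ℝ E : ℝ) - 1] :=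
    hgi.add (integrable_const ε)
  have hCtop : K * shellConst μ ≠ ∞ := ENNReal.mul_ne_top coe_ne_top (shellConst_ne_top μ)
  have hbound := lintegral_mul_enorm_fderiv_radialCutoff_le μ hK hδ hδr (x := x)
    (g := fun y ↦ ENNReal.ofReal (g y)) (G := fun y ↦ ENNReal.ofReal (g y + ε))
    (by fun_prop) fun y hy ↦ ENNReal.ofReal_le_ofReal (hshell y hy)
  rw [← ofReal_integral_eq_lintegral_ofReal hgεi (.of_forall fun y ↦ add_nonneg (hg0 y) hε),
    integral_add hgi (integrable_const ε), setIntegral_const, smul_eq_mul,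
    ← ENNReal.ofReal_toReal hCtop, ← ENNReal.ofReal_mul toReal_nonneg] at hbound
  rw [integral_eq_lintegral_of_nonneg_ae (.of_forall fun y ↦ mul_nonneg (hg0 y) (norm_nonneg _))]
  · have hI : 0 ≤ ∫ y in sphere x r, g y ∂μH[(Module.finrank ℝ E : ℝ) - 1] :=
      integral_nonneg hg0
    simp_rw [ENNReal.ofReal_mul (hg0 _), ofReal_norm]
    exact ENNReal.toReal_le_of_le_ofReal (by positivity) hbound
  · exact (hg.mul ((contDiff_radialCutoff (m := 1) x hδ hδr).continuous_fderiv
      one_ne_zero).norm).aestronglyMeasurable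

lemma exists_integral_mul_norm_fderiv_radialCutoff_le (E : Type*) [NormedAddCommGroup E]
    [InnerProductSpace ℝ E] [FiniteDimensional ℝ E] [Nontrivial E] [MeasurableSpace E]
    [BorelSpace E] (μ : Measure E) [μ.IsAddHaarMeasure] :
    ∃ C : ℝ, 0 < C ∧ ∀ {g : E → ℝ}, Continuous g → (∀ y, 0 ≤ g y) →
      ∀ (x : E) {r : ℝ}, 0 < r → ∀ {η : ℝ}, 0 < η →
        ∀ᶠ δ in 𝓝[>] 0, ∫ y, g y * ‖fderiv ℝ (radialCutoff x r δ) y‖ ∂μ ≤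
          C * (∫ y in sphere x r, g y ∂μH[(Module.finrank ℝ E : ℝ) - 1] + η) := by
  obtain ⟨K, hK⟩ := exists_lipschitzWith_smoothTransition
  refine ⟨(K * shellConst μ).toReal + 1, by positivity, fun {g} hg hg0 x {r} hr {η} hη ↦ ?_⟩
  set A := (μH[(Module.finrank ℝ E : ℝ) - 1]).real (sphere x r)
  have hI : 0 ≤ ∫ y in sphere x r, g y ∂μH[(Module.finrank ℝ E : ℝ) - 1] := integral_nonneg hg0
  have hε : 0 < η / (A + 1) := by positivity
  filter_upwards [Ioo_mem_nhdsGT hr, eventually_le_comp_radProj_add hg x hr hε]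
    with δ ⟨hδ, hδr⟩ hshell
  refine (integral_mul_norm_fderiv_radialCutoff_le μ hK hδ hδr hg hg0 hε.le hshell).trans ?_
  have hεη : A * (η / (A + 1)) ≤ η := by
    rw [mul_div_assoc', div_le_iff₀ (by positivity)]
    linarith
  gcongr
  linarith

end RadialCutoff

section BoundaryEstimate

local notation "𝔼" => EuclideanSpace ℝ (Fin n)

lemma abs_integral_radialCutoff_mul_le {f : 𝔼 → 𝔼} (hf : ContDiff ℝ 1 f) {Φ : 𝔼 → ℝ}
    (hΦ : ContDiff ℝ 1 Φ) (x : 𝔼) {r δ : ℝ} (hδ : 0 < δ) (hδr : δ < r) (e : 𝔼) :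
    |∫ y, radialCutoff x r δ y * (fderiv ℝ Φ (f y) e * jacDet f y)| ≤
      ‖e‖ * ∫ y, |Φ (f y)| * cofNorm f y * ‖fderiv ℝ (radialCutoff x r δ) y‖ := by
  have hψ : ContDiff ℝ 1 (radialCutoff x r δ) := contDiff_radialCutoff x hδ hδr
  have hψc : HasCompactSupport (radialCutoff x r δ) := hasCompactSupport_radialCutoff x r hδ
  have hψ'c : HasCompactSupport fun y ↦ ‖fderiv ℝ (radialCutoff x r δ) y‖ := (hψc.fderiv ℝ).norm
  have hcof := continuous_cofNorm hf
  rw [integral_mul_fderiv_mul_jacDet hf hψ hψc hΦ e, abs_neg, ← integral_const_mul,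
    ← Real.norm_eq_abs]
  have hint : Integrable fun y ↦
      ‖e‖ * (|Φ (f y)| * cofNorm f y * ‖fderiv ℝ (radialCutoff x r δ) y‖) :=
    Continuous.integrable_of_hasCompactSupport (by fun_prop) hψ'c.mul_left.mul_left
  refine norm_integral_le_of_norm_le hint (.of_forall fun y ↦ ?_)
  rw [Real.norm_eq_abs, abs_mul]
  calc |Φ (f y)| * |fderiv ℝ (radialCutoff x r δ) y (adjDeriv f y e)|
      ≤ |Φ (f y)| * (‖fderiv ℝ (radialCutoff x r δ) y‖ * (cofNorm f y * ‖e‖)) := by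
        gcongr
        exact abs_apply_adjDeriv_le _ f y e
    _ = ‖e‖ * (|Φ (f y)| * cofNorm f y * ‖fderiv ℝ (radialCutoff x r δ) y‖) := by ring

lemma exists_abs_setIntegral_fderiv_mul_jacDet_le [Nontrivial 𝔼] :
    ∃ C : ℝ, 0 < C ∧ ∀ {f : 𝔼 → 𝔼}, ContDiff ℝ 1 f → ∀ {Φ : 𝔼 → ℝ}, ContDiff ℝ 1 Φ →
      ∀ (x : 𝔼) {r : ℝ}, 0 < r → ∀ e : 𝔼,
        |∫ y in ball x r, fderiv ℝ Φ (f y) e * jacDet f y| ≤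
          C * ‖e‖ * ∫ y in sphere x r, |Φ (f y)| * cofNorm f y ∂μH[(n : ℝ) - 1] := by
  obtain ⟨C, hC, hbound⟩ := exists_integral_mul_norm_fderiv_radialCutoff_le 𝔼 volume
  rw [finrank_euclideanSpace_fin] at hbound
  refine ⟨C, hC, fun {f} hf {Φ} hΦ x {r} hr e ↦ ?_⟩
  have hcof := continuous_cofNorm hf
  have hJ := continuous_jacDet hf
  have hg : Continuous fun y ↦ |Φ (f y)| * cofNorm f y := by fun_prop
  have hg0 : ∀ y, 0 ≤ |Φ (f y)| * cofNorm f y :=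
    fun y ↦ mul_nonneg (abs_nonneg _) (cofNorm_nonneg f y)
  have hh : Continuous fun y ↦ fderiv ℝ Φ (f y) e * jacDet f y := by fun_prop
  have hlim : Tendsto (fun δ ↦ |∫ y, radialCutoff x r δ y * (fderiv ℝ Φ (f y) e * jacDet f y)|)
      (𝓝[>] 0) (𝓝 |∫ y in ball x r, fderiv ℝ Φ (f y) e * jacDet f y|) :=
    (tendsto_integral_radialCutoff_smul hh.aestronglyMeasurable
      ((hh.continuousOn.integrableOn_compact (isCompact_closedBall x r)).mono_set
        ball_subset_closedBall)).abs
  have hη : ∀ η > 0, |∫ y in ball x r, fderiv ℝ Φ (f y) e * jacDet f y| ≤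
      ‖e‖ * (C * (∫ y in sphere x r, |Φ (f y)| * cofNorm f y ∂μH[(n : ℝ) - 1] + η)) :=
    fun η hη ↦ le_of_tendsto hlim <| by
      filter_upwards [Ioo_mem_nhdsGT hr, hbound hg hg0 x hr hη] with δ ⟨hδ, hδr⟩ hle
      exact (abs_integral_radialCutoff_mul_le hf hΦ x hδ hδr e).trans (by gcongr)
  have hlim₀ : Tendsto (fun η ↦ ‖e‖ * (C *
      (∫ y in sphere x r, |Φ (f y)| * cofNorm f y ∂μH[(n : ℝ) - 1] + η))) (𝓝[>] 0)
      (𝓝 (‖e‖ * (C * (∫ y in sphere x r, |Φ (f y)| * cofNorm f y ∂μH[(n : ℝ) - 1] + 0)))) :=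
    (Continuous.tendsto (by fun_prop) 0).mono_left nhdsWithin_le_nhds
  rw [mul_comm C, mul_assoc]
  rw [add_zero] at hlim₀
  exact ge_of_tendsto hlim₀ (eventually_mem_nhdsWithin.mono hη)

end BoundaryEstimate

section AreaFormula

lemma toReal_encard {α : Type*} (s : Set α) : (s.encard : ℝ≥0∞).toReal = s.ncard := by
  rw [ncard]
  induction s.encard using ENat.recTopCoe <;> simp

lemma encard_iUnion_eq_tsum {α ι : Type*} [Countable ι] {s : ι → Set α}
    (hs : Pairwise (Function.onFun Disjoint s)) :
    ((⋃ i, s i).encard : ℝ≥0∞) = ∑' i, ((s i).encard : ℝ≥0∞) := by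
  let _ : MeasurableSpace α := ⊤
  simpa only [Measure.count_apply MeasurableSpace.measurableSet_top] using
    measure_iUnion (μ := Measure.count) hs fun _ ↦ MeasurableSpace.measurableSet_top

lemma encard_inter_preimage_singleton_of_injOn {α β : Type*} {f : α → β} {s : Set α}
    (hf : InjOn f s) (z : β) :
    ((s ∩ f ⁻¹' {z}).encard : ℝ≥0∞) = (f '' s).indicator 1 z := by
  by_cases hz : z ∈ f '' s
  · obtain ⟨y, hy, rfl⟩ := hz
    have hfiber : s ∩ f ⁻¹' {f y} = {y} :=
      Subset.antisymm (fun w hw ↦ hf hw.1 hy hw.2) (singleton_subset_iff.mpr ⟨hy, rfl⟩)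
    rw [hfiber, indicator_of_mem (mem_image_of_mem f hy), encard_singleton, ENat.toENNReal_one,
      Pi.one_apply]
  · have hfiber : s ∩ f ⁻¹' {z} = ∅ := eq_empty_of_forall_notMem fun w hw ↦ hz ⟨w, hw⟩
    rw [hfiber, indicator_of_notMem hz, encard_empty, ENat.toENNReal_zero]

lemma encard_iUnion_inter_preimage_singleton {α β ι : Type*} [Countable ι] {f : α → β}
    {A : ι → Set α} (hA : Pairwise (Function.onFun Disjoint A)) (hf : ∀ i, InjOn f (A i)) (z : β) :
    (((⋃ i, A i) ∩ f ⁻¹' {z}).encard : ℝ≥0∞) = ∑' i, (f '' A i).indicator 1 z := by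
  rw [iUnion_inter, encard_iUnion_eq_tsum fun i j hij ↦
    (hA hij).mono inter_subset_left inter_subset_left]
  exact tsum_congr fun i ↦ encard_inter_preimage_singleton_of_injOn (hf i) z

variable {E : Type*} [NormedAddCommGroup E] [NormedSpace ℝ E]

variable [FiniteDimensional ℝ E] [MeasurableSpace E] [BorelSpace E] {f : E → E}
  {f' : E → E →L[ℝ] E} {s : Set E}

lemma exists_injOn_partition (hs : MeasurableSet s)
    (hf : ∀ x ∈ s, HasStrictFDerivAt f (f' x) x) (hdet : ∀ x ∈ s, (f' x).det ≠ 0) :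
    ∃ A : ℕ → Set E, (∀ k, MeasurableSet (A k)) ∧ Pairwise (Function.onFun Disjoint A) ∧
      (∀ k, InjOn f (A k)) ∧ ⋃ k, A k = s := by
  have hlocal : ∀ x ∈ s, ∃ U : Set E, IsOpen U ∧ x ∈ U ∧ InjOn f U := fun x hx ↦ by
    have hstrict := hf x hx
    rw [← ContinuousLinearMap.coe_toContinuousLinearEquivOfDetNeZero _ (hdet x hx)] at hstrict
    exact ⟨_, (hstrict.toOpenPartialHomeomorph f).open_source,
      hstrict.mem_toOpenPartialHomeomorph_source, (hstrict.toOpenPartialHomeomorph f).injOn⟩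
  choose! U hUo hxU hUinj using hlocal
  obtain ⟨t, hts, htc, hst⟩ := TopologicalSpace.countable_cover_nhdsWithin fun x hx ↦
    mem_nhdsWithin_of_mem_nhds ((hUo x hx).mem_nhds (hxU x hx))
  obtain ⟨V, hV⟩ := (htc.image U |>.insert ∅).exists_eq_range (insert_nonempty _ _)
  have hVo : ∀ k, IsOpen (V k) ∧ InjOn f (V k) := fun k ↦ by
    obtain hk | ⟨x, hx, hk⟩ : V k ∈ insert ∅ (U '' t) := hV ▸ mem_range_self k
    · rw [hk]
      exact ⟨isOpen_empty, injOn_empty f⟩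
    · rw [← hk]
      exact ⟨hUo x (hts hx), hUinj x (hts hx)⟩
  have hsV : s ⊆ ⋃ k, V k := fun y hy ↦ by
    obtain ⟨x, hx, hyx⟩ := mem_iUnion₂.mp (hst hy)
    rw [← sUnion_range, ← hV]
    exact ⟨U x, mem_insert_of_mem _ (mem_image_of_mem U hx), hyx⟩
  refine ⟨fun k ↦ s ∩ disjointed V k,
    fun k ↦ hs.inter (.disjointed (fun i ↦ (hVo i).1.measurableSet) k),
    fun i j hij ↦ (disjoint_disjointed V hij).mono inter_subset_right inter_subset_right,
    fun k ↦ (hVo k).2.mono (inter_subset_right.trans (disjointed_subset V k)), ?_⟩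
  rw [← inter_iUnion, iUnion_disjointed, inter_eq_left]
  exact hsV

lemma measurable_encard_inter_preimage_singleton (hs : MeasurableSet s)
    (hf : ∀ x ∈ s, HasStrictFDerivAt f (f' x) x) (hdet : ∀ x ∈ s, (f' x).det ≠ 0) :
    Measurable fun z ↦ ((s ∩ f ⁻¹' {z}).encard : ℝ≥0∞) := by
  obtain ⟨A, hA, hAd, hAinj, rfl⟩ := exists_injOn_partition hs hf hdet
  have himage : ∀ k, MeasurableSet (f '' A k) := fun k ↦
    measurable_image_of_fderivWithin (hA k)
      (fun x hx ↦ (hf x (mem_iUnion_of_mem k hx)).hasFDerivAt.hasFDerivWithinAt) (hAinj k)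
  simp_rw [encard_iUnion_inter_preimage_singleton hAd hAinj]
  exact .tsum fun k ↦ measurable_one.indicator (himage k)

theorem lintegral_abs_det_fderiv_mul_comp (μ : Measure E) [μ.IsAddHaarMeasure]
    (hs : MeasurableSet s) (hf : ∀ x ∈ s, HasStrictFDerivAt f (f' x) x)
    (hdet : ∀ x ∈ s, (f' x).det ≠ 0) {g : E → ℝ≥0∞} (hg : Measurable g) :
    ∫⁻ x in s, ENNReal.ofReal |(f' x).det| * g (f x) ∂μ =
      ∫⁻ z, (s ∩ f ⁻¹' {z}).encard * g z ∂μ := by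
  obtain ⟨A, hA, hAd, hAinj, rfl⟩ := exists_injOn_partition hs hf hdet
  have hf' : ∀ k, ∀ x ∈ A k, HasFDerivWithinAt f (f' x) (A k) x := fun k x hx ↦
    (hf x (mem_iUnion_of_mem k hx)).hasFDerivAt.hasFDerivWithinAt
  have himage : ∀ k, MeasurableSet (f '' A k) := fun k ↦
    measurable_image_of_fderivWithin (hA k) (hf' k) (hAinj k)
  calc ∫⁻ x in ⋃ k, A k, ENNReal.ofReal |(f' x).det| * g (f x) ∂μ
      = ∑' k, ∫⁻ x in A k, ENNReal.ofReal |(f' x).det| * g (f x) ∂μ := lintegral_iUnion hA hAd _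
    _ = ∑' k, ∫⁻ z, (f '' A k).indicator 1 z * g z ∂μ := by
        refine tsum_congr fun k ↦ ?_
        rw [← lintegral_image_eq_lintegral_abs_det_fderiv_mul μ (hA k) (hf' k) (hAinj k),
          ← lintegral_indicator (himage k)]
        simp_rw [← indicator_mul_left, Pi.one_apply, one_mul]
    _ = ∫⁻ z, ∑' k, (f '' A k).indicator 1 z * g z ∂μ :=
        (lintegral_tsum fun k ↦
          ((measurable_one.indicator (himage k)).mul hg).aemeasurable).symm
    _ = ∫⁻ z, ((⋃ k, A k) ∩ f ⁻¹' {z}).encard * g z ∂μ := by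
        simp_rw [encard_iUnion_inter_preimage_singleton hAd hAinj, ENNReal.tsum_mul_right]

lemma lintegral_encard_inter_preimage_singleton_lt_top {μ : Measure E} [μ.IsAddHaarMeasure]
    (hs : MeasurableSet s) (hf : ∀ x ∈ s, HasStrictFDerivAt f (f' x) x)
    (hdet : ∀ x ∈ s, (f' x).det ≠ 0) (hint : IntegrableOn (fun x ↦ (f' x).det) s μ) :
    ∫⁻ z, (s ∩ f ⁻¹' {z}).encard ∂μ < ∞ := by
  have harea := lintegral_abs_det_fderiv_mul_comp μ hs hf hdet (g := 1) measurable_one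
  simp only [Pi.one_apply, mul_one] at harea
  rw [← harea]
  exact hint.abs.lintegral_lt_top

lemma integrable_ncard_inter_preimage_singleton {μ : Measure E} [μ.IsAddHaarMeasure]
    (hs : MeasurableSet s) (hf : ∀ x ∈ s, HasStrictFDerivAt f (f' x) x)
    (hdet : ∀ x ∈ s, (f' x).det ≠ 0) (hint : IntegrableOn (fun x ↦ (f' x).det) s μ) :
    Integrable (fun z ↦ ((s ∩ f ⁻¹' {z}).ncard : ℝ)) μ := by
  simp_rw [← toReal_encard]
  exact integrable_toReal_of_lintegral_ne_top
    (measurable_encard_inter_preimage_singleton hs hf hdet).aemeasurable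
    (lintegral_encard_inter_preimage_singleton_lt_top hs hf hdet hint).ne

theorem setIntegral_abs_det_fderiv_smul_comp {F : Type*} [NormedAddCommGroup F] [NormedSpace ℝ F]
    {μ : Measure E} [μ.IsAddHaarMeasure] (hfm : Measurable f)
    (hs : MeasurableSet s) (hf : ∀ x ∈ s, HasStrictFDerivAt f (f' x) x)
    (hdet : ∀ x ∈ s, (f' x).det ≠ 0) (hint : IntegrableOn (fun x ↦ (f' x).det) s μ)
    {g : E → F} (hg : StronglyMeasurable g) :
    ∫ x in s, |(f' x).det| • g (f x) ∂μ = ∫ z, ((s ∩ f ⁻¹' {z}).ncard : ℝ) • g z ∂μ := by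
  have hdensity : AEMeasurable (fun x ↦ ENNReal.ofReal |(f' x).det|) (μ.restrict s) :=
    aemeasurable_ofReal_abs_det_fderivWithin μ hs fun x hx ↦ (hf x hx).hasFDerivAt.hasFDerivWithinAt
  have hN := measurable_encard_inter_preimage_singleton hs hf hdet
  have hmap : ((μ.restrict s).withDensity fun x ↦ ENNReal.ofReal |(f' x).det|).map f =
      μ.withDensity fun z ↦ (s ∩ f ⁻¹' {z}).encard :=
    Measure.ext_of_lintegral _ fun h hh ↦ by
      rw [lintegral_map hh hfm, lintegral_withDensity_eq_lintegral_mul_non_measurable₀ _ hdensity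
        (by simp), lintegral_withDensity_eq_lintegral_mul μ hN hh]
      exact lintegral_abs_det_fderiv_mul_comp μ hs hf hdet hh
  calc ∫ x in s, |(f' x).det| • g (f x) ∂μ
      = ∫ x, g (f x) ∂(μ.restrict s).withDensity fun x ↦ ENNReal.ofReal |(f' x).det| := by
        rw [integral_withDensity_eq_integral_toReal_smul₀ hdensity (by simp)]
        simp_rw [ENNReal.toReal_ofReal (abs_nonneg _)]
    _ = ∫ z, g z ∂μ.withDensity fun z ↦ (s ∩ f ⁻¹' {z}).encard := by
        rw [← hmap, integral_map hfm.aemeasurable hg.aestronglyMeasurable]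
    _ = ∫ z, ((s ∩ f ⁻¹' {z}).ncard : ℝ) • g z ∂μ := by
        rw [integral_withDensity_eq_integral_toReal_smul hN (ae_lt_top hN
          (lintegral_encard_inter_preimage_singleton_lt_top hs hf hdet hint).ne)]
        simp_rw [toReal_encard]

end AreaFormula

section Degree

variable {E : Type*} [NormedAddCommGroup E] [NormedSpace ℝ E]

/-- The degree of `f` on `s` at `z`: the number of points of `s` over `z` at which `f` preserves
the orientation, minus the number of those at which it reverses it. Critical points are ignored,
and an infinite family of preimages of one kind counts as `0`. -/
def preimageDegree (f : E → E) (s : Set E) (z : E) : ℤ :=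
  (s ∩ {y | 0 < (fderiv ℝ f y).det} ∩ f ⁻¹' {z}).ncard -
    (s ∩ {y | (fderiv ℝ f y).det < 0} ∩ f ⁻¹' {z}).ncard

lemma preimageDegree_eq_zero {f : E → E} {s : Set E} {z : E} (hz : z ∉ f '' s) :
    preimageDegree f s z = 0 := by
  have hfiber : ∀ P : Set E, s ∩ P ∩ f ⁻¹' {z} = ∅ := fun P ↦
    eq_empty_of_forall_notMem fun y hy ↦ hz ⟨y, hy.1.1, hy.2⟩
  rw [preimageDegree, hfiber, hfiber, sub_self]

variable [FiniteDimensional ℝ E] [MeasurableSpace E] [BorelSpace E] {μ : Measure E}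
  [μ.IsAddHaarMeasure] {f : E → E} {s : Set E}

lemma measurable_det_fderiv (f : E → E) : Measurable fun y ↦ (fderiv ℝ f y).det :=
  ContinuousLinearMap.continuous_det.measurable.comp (measurable_fderiv ℝ f)

lemma integrable_preimageDegree (hf : ContDiff ℝ 1 f) (hs : MeasurableSet s)
    (hint : IntegrableOn (fun y ↦ (fderiv ℝ f y).det) s μ) :
    Integrable (fun z ↦ (preimageDegree f s z : ℝ)) μ := by
  have hdet := measurable_det_fderiv f
  have hstrict : ∀ y, HasStrictFDerivAt f (fderiv ℝ f y) y := fun y ↦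
    hf.contDiffAt.hasStrictFDerivAt one_ne_zero
  simp_rw [preimageDegree, Int.cast_sub, Int.cast_natCast]
  refine .sub ?_ ?_
  · exact integrable_ncard_inter_preimage_singleton
      (hs.inter (measurableSet_lt measurable_const hdet)) (fun y _ ↦ hstrict y)
      (fun y hy ↦ hy.2.ne') (hint.mono_set inter_subset_left)
  · exact integrable_ncard_inter_preimage_singleton
      (hs.inter (measurableSet_lt hdet measurable_const)) (fun y _ ↦ hstrict y)
      (fun y hy ↦ hy.2.ne) (hint.mono_set inter_subset_left)

theorem setIntegral_det_fderiv_smul_comp {F : Type*} [NormedAddCommGroup F] [NormedSpace ℝ F]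
    (hf : ContDiff ℝ 1 f) (hs : MeasurableSet s)
    (hint : IntegrableOn (fun y ↦ (fderiv ℝ f y).det) s μ) {g : E → F} (hg : StronglyMeasurable g)
    {M : ℝ} (hgM : ∀ z, ‖g z‖ ≤ M) :
    ∫ y in s, (fderiv ℝ f y).det • g (f y) ∂μ = ∫ z, (preimageDegree f s z : ℝ) • g z ∂μ := by
  let J : E → ℝ := fun y ↦ (fderiv ℝ f y).det
  have hdet : Measurable J := measurable_det_fderiv f
  have hstrict : ∀ y, HasStrictFDerivAt f (fderiv ℝ f y) y := fun y ↦
    hf.contDiffAt.hasStrictFDerivAt one_ne_zero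
  have hP : MeasurableSet {y | 0 < J y} := measurableSet_lt measurable_const hdet
  have hN : MeasurableSet {y | J y < 0} := measurableSet_lt hdet measurable_const
  have hsplit : ∀ y, J y • g (f y) = {y | 0 < J y}.indicator (fun y ↦ |J y| • g (f y)) y -
      {y | J y < 0}.indicator (fun y ↦ |J y| • g (f y)) y := fun y ↦ by
    rcases lt_trichotomy (J y) 0 with h | h | h <;>
      simp [indicator, h, not_lt_of_gt, abs_of_neg, abs_of_pos]
  have hgf : IntegrableOn (fun y ↦ |J y| • g (f y)) s μ :=
    hint.abs.smul_bdd M (hg.comp_measurable hf.continuous.measurable).aestronglyMeasurable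
      (.of_forall fun y ↦ hgM (f y))
  have hcount : ∀ A ⊆ s, MeasurableSet A → (∀ y ∈ A, J y ≠ 0) →
      Integrable (fun z ↦ ((A ∩ f ⁻¹' {z}).ncard : ℝ) • g z) μ ∧
        ∫ y in A, |J y| • g (f y) ∂μ = ∫ z, ((A ∩ f ⁻¹' {z}).ncard : ℝ) • g z ∂μ :=
    fun A hAs hA hdetA ↦
      ⟨(integrable_ncard_inter_preimage_singleton hA (fun y _ ↦ hstrict y) hdetA
        (hint.mono_set hAs)).smul_bdd M hg.aestronglyMeasurable (.of_forall hgM),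
      setIntegral_abs_det_fderiv_smul_comp hf.continuous.measurable hA (fun y _ ↦ hstrict y) hdetA
        (hint.mono_set hAs) hg⟩
  obtain ⟨hPi, hPe⟩ := hcount _ inter_subset_left (hs.inter hP) fun y hy ↦ hy.2.ne'
  obtain ⟨hNi, hNe⟩ := hcount _ inter_subset_left (hs.inter hN) fun y hy ↦ hy.2.ne
  refine (setIntegral_congr_fun hs fun y _ ↦ hsplit y).trans ?_
  rw [integral_sub (hgf.indicator hP) (hgf.indicator hN), setIntegral_indicator hP,
    setIntegral_indicator hN, hPe, hNe, ← integral_sub hPi hNi]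
  simp_rw [preimageDegree, Int.cast_sub, Int.cast_natCast, sub_smul]
  rfl

end Degree

section Sobolev

open scoped Convolution

variable {E : Type*} [NormedAddCommGroup E] [NormedSpace ℝ E] [FiniteDimensional ℝ E]
  [MeasurableSpace E] [BorelSpace E]

-- The Gagliardo-Nirenberg-Sobolev inequality for functions of bounded variation.
theorem eLpNorm_le_of_lintegral_enorm_fderiv_convolution_le {F : Type*} [NormedAddCommGroup F]
    [NormedSpace ℝ F] [CompleteSpace F] (μ : Measure E) [μ.IsAddHaarMeasure] {u : E → F}
    (hu : LocallyIntegrable u μ) (huc : HasCompactSupport u) {p : ℝ≥0}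
    (hp : (Module.finrank ℝ E : ℝ≥0).HolderConjugate p) {M : ℝ≥0∞}
    (hM : ∀ φ : ContDiffBump (0 : E),
      ∫⁻ z, ‖fderiv ℝ (φ.normed μ ⋆[ContinuousLinearMap.lsmul ℝ ℝ, μ] u) z‖ₑ ∂μ ≤ M) :
    eLpNorm u p μ ≤ eLpNormLESNormFDerivOneConst μ p * M := by
  let φ : ℕ → ContDiffBump (0 : E) := fun k ↦
    ⟨1 / ((k : ℝ) + 1), 2 * (1 / ((k : ℝ) + 1)), by positivity,
      lt_mul_of_one_lt_left (by positivity) one_lt_two⟩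
  have hsmooth : ∀ k, ContDiff ℝ 1 ((φ k).normed μ ⋆[ContinuousLinearMap.lsmul ℝ ℝ, μ] u) :=
    fun k ↦ (φ k).hasCompactSupport_normed.contDiff_convolution_left _
      ((φ k).contDiff_normed (n := 1)) hu
  have hrOut : Tendsto (fun k ↦ (φ k).rOut) atTop (𝓝 0) := by
    have h := (tendsto_one_div_add_atTop_nhds_zero_nat (𝕜 := ℝ)).const_mul 2
    rwa [mul_zero] at h
  refine Lp.eLpNorm_le_of_ae_tendsto (u := atTop) (.of_forall fun k ↦ ?_)
    (fun k ↦ (hsmooth k).continuous.aestronglyMeasurable)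
    (ContDiffBump.ae_convolution_tendsto_right_of_locallyIntegrable (K := 2) hrOut
      (.of_forall fun _ ↦ le_rfl) hu)
  refine (eLpNorm_le_eLpNorm_fderiv_one μ (hsmooth k)
    (HasCompactSupport.convolution _ (φ k).hasCompactSupport_normed huc) hp).trans ?_
  rw [eLpNorm_one_eq_lintegral_enorm]
  gcongr
  exact hM (φ k)

end Sobolev

section DegreeVariation

open scoped Convolution

variable {E : Type*} [NormedAddCommGroup E] [NormedSpace ℝ E] [FiniteDimensional ℝ E]
  [MeasurableSpace E] [BorelSpace E] {μ : Measure E} [μ.IsAddHaarMeasure]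

lemma fderiv_convolution_preimageDegree {f : E → E} (hf : ContDiff ℝ 1 f) {s : Set E}
    (hs : MeasurableSet s) (hint : IntegrableOn (fun y ↦ (fderiv ℝ f y).det) s μ) {φ : E → ℝ}
    (hφ : ContDiff ℝ 1 φ) (hφc : HasCompactSupport φ) (z : E) :
    fderiv ℝ (φ ⋆[ContinuousLinearMap.lsmul ℝ ℝ, μ] fun w ↦ (preimageDegree f s w : ℝ)) z =
      ∫ y in s, (fderiv ℝ f y).det • fderiv ℝ φ (z - f y) ∂μ := by
  have hφ' := hφ.continuous_fderiv one_ne_zero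
  obtain ⟨M, hM⟩ := hφ'.bounded_above_of_compact_support (hφc.fderiv ℝ)
  have hg : Continuous fun w ↦ fderiv ℝ φ (z - w) := by fun_prop
  rw [(hφc.hasFDerivAt_convolution_left _ hφ
    (integrable_preimageDegree hf hs hint).locallyIntegrable z).fderiv, convolution_eq_swap,
    setIntegral_det_fderiv_smul_comp (g := fun w ↦ fderiv ℝ φ (z - w)) hf hs hint
      hg.stronglyMeasurable fun w ↦ hM (z - w)]
  congr with w e
  simp [mul_comm]

lemma lintegral_enorm_integral_comp_sub_mul_le {α : Type*} [MeasurableSpace α] {σ : Measure α}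
    [SFinite σ] {φ : E → ℝ} (hφ : Measurable φ) {f : α → E} (hf : Measurable f) {c : α → ℝ}
    (hc : Measurable c) :
    ∫⁻ z, ‖∫ y, |φ (z - f y)| * c y ∂σ‖ₑ ∂μ ≤ (∫⁻ z, ‖φ z‖ₑ ∂μ) * ∫⁻ y, ‖c y‖ₑ ∂σ := by
  calc ∫⁻ z, ‖∫ y, |φ (z - f y)| * c y ∂σ‖ₑ ∂μ
      ≤ ∫⁻ z, ∫⁻ y, ‖φ (z - f y)‖ₑ * ‖c y‖ₑ ∂σ ∂μ := by
        refine lintegral_mono fun z ↦ (enorm_integral_le_lintegral_enorm _).trans_eq ?_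
        simp_rw [enorm_mul, Real.enorm_abs]
    _ = ∫⁻ y, ∫⁻ z, ‖φ (z - f y)‖ₑ * ‖c y‖ₑ ∂μ ∂σ := lintegral_lintegral_swap (by fun_prop)
    _ = ∫⁻ y, (∫⁻ z, ‖φ z‖ₑ ∂μ) * ‖c y‖ₑ ∂σ := by
        refine lintegral_congr fun y ↦ ?_
        rw [lintegral_mul_const _ (by fun_prop), lintegral_sub_right_eq_self (fun z ↦ ‖φ z‖ₑ)]
    _ = (∫⁻ z, ‖φ z‖ₑ ∂μ) * ∫⁻ y, ‖c y‖ₑ ∂σ := lintegral_const_mul _ hc.enorm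

end DegreeVariation

section Isoperimetric

local notation "𝔼" => EuclideanSpace ℝ (Fin n)

open scoped Convolution

lemma integrableOn_ball_det_fderiv {f : 𝔼 → 𝔼} (hf : ContDiff ℝ 1 f) (x : 𝔼) (r : ℝ) :
    IntegrableOn (fun y ↦ (fderiv ℝ f y).det) (ball x r) := by
  simp_rw [← jacDet_eq_det_fderiv]
  exact ((continuous_jacDet hf).continuousOn.integrableOn_compact
    (isCompact_closedBall x r)).mono_set ball_subset_closedBall

lemma exists_norm_fderiv_convolution_preimageDegree_ball_le [Nontrivial 𝔼] :
    ∃ C : ℝ, 0 < C ∧ ∀ {f : 𝔼 → 𝔼}, ContDiff ℝ 1 f → ∀ {φ : 𝔼 → ℝ}, ContDiff ℝ 1 φ →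
      HasCompactSupport φ → ∀ (x : 𝔼) {r : ℝ}, 0 < r → ∀ z : 𝔼,
        ‖fderiv ℝ (φ ⋆[ContinuousLinearMap.lsmul ℝ ℝ, volume]
            fun w ↦ (preimageDegree f (ball x r) w : ℝ)) z‖ ≤
          C * ∫ y in sphere x r, |φ (z - f y)| * cofNorm f y ∂μH[(n : ℝ) - 1] := by
  obtain ⟨C, hC, hCf⟩ := exists_abs_setIntegral_fderiv_mul_jacDet_le (n := n)
  refine ⟨C, hC, fun {f} hf {φ} hφ hφc x {r} hr z ↦ ?_⟩
  have hint := integrableOn_ball_det_fderiv hf x r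
  have hS : 0 ≤ ∫ y in sphere x r, |φ (z - f y)| * cofNorm f y ∂μH[(n : ℝ) - 1] :=
    integral_nonneg fun y ↦ mul_nonneg (abs_nonneg _) (cofNorm_nonneg f y)
  have hvec : IntegrableOn (fun y ↦ (fderiv ℝ f y).det • fderiv ℝ φ (z - f y)) (ball x r) := by
    have hJ := continuous_jacDet hf
    simp_rw [← jacDet_eq_det_fderiv]
    exact (Continuous.continuousOn (by fun_prop)).integrableOn_compact
      (isCompact_closedBall x r) |>.mono_set ball_subset_closedBall
  refine ContinuousLinearMap.opNorm_le_bound _ (by positivity) fun e ↦ ?_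
  have hΦ : ∀ w, fderiv ℝ (fun w ↦ φ (z - w)) w e = -fderiv ℝ φ (z - w) e := fun w ↦ by
    have h := ((hφ.differentiable one_ne_zero (z - w)).hasFDerivAt).comp w
      ((hasFDerivAt_id w).const_sub z)
    simpa [Function.comp_def] using DFunLike.congr_fun h.fderiv e
  calc ‖fderiv ℝ (φ ⋆[ContinuousLinearMap.lsmul ℝ ℝ, volume]
          fun w ↦ (preimageDegree f (ball x r) w : ℝ)) z e‖
      = |∫ y in ball x r, fderiv ℝ (fun w ↦ φ (z - w)) (f y) e * jacDet f y| := by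
        rw [fderiv_convolution_preimageDegree hf measurableSet_ball hint hφ hφc,
          ContinuousLinearMap.integral_apply hvec, ← norm_neg, ← integral_neg, Real.norm_eq_abs]
        simp_rw [hΦ, jacDet_eq_det_fderiv]
        simp [mul_comm]
    _ ≤ C * ‖e‖ * ∫ y in sphere x r, |φ (z - f y)| * cofNorm f y ∂μH[(n : ℝ) - 1] :=
        hCf hf (hφ.comp (contDiff_const.sub contDiff_id)) x hr e
    _ = _ := by ring

lemma exists_lintegral_enorm_fderiv_convolution_preimageDegree_ball_le [Nontrivial 𝔼] :
    ∃ C : ℝ, 0 < C ∧ ∀ {f : 𝔼 → 𝔼}, ContDiff ℝ 1 f → ∀ (x : 𝔼) {r : ℝ}, 0 < r →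
      ∀ φ : ContDiffBump (0 : 𝔼),
        ∫⁻ z, ‖fderiv ℝ (φ.normed volume ⋆[ContinuousLinearMap.lsmul ℝ ℝ, volume]
            fun w ↦ (preimageDegree f (ball x r) w : ℝ)) z‖ₑ ≤
          ENNReal.ofReal (C * ∫ y in sphere x r, cofNorm f y ∂μH[(n : ℝ) - 1]) := by
  obtain ⟨C, hC, hCf⟩ := exists_norm_fderiv_convolution_preimageDegree_ball_le (n := n)
  refine ⟨C, hC, fun {f} hf x {r} hr φ ↦ ?_⟩
  set σ : Measure 𝔼 := μH[(n : ℝ) - 1].restrict (sphere x r) with hσ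
  have hcof := continuous_cofNorm hf
  have hcofI : Integrable (cofNorm f) σ := by
    simpa [hσ, IntegrableOn] using integrableOn_sphere_of_continuous hcof x hr
  have : IsFiniteMeasure σ := ⟨by
    simpa [hσ] using hausdorffMeasure_sphere_lt_top x hr⟩
  have hφ1 : ∫⁻ z, ‖φ.normed volume z‖ₑ = 1 := by
    rw [← ofReal_integral_norm_eq_lintegral_enorm φ.integrable_normed]
    simp [abs_of_nonneg (φ.nonneg_normed _), φ.integral_normed]
  calc ∫⁻ z, ‖fderiv ℝ (φ.normed volume ⋆[ContinuousLinearMap.lsmul ℝ ℝ, volume]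
          fun w ↦ (preimageDegree f (ball x r) w : ℝ)) z‖ₑ
      ≤ ∫⁻ z, ‖C‖ₑ * ‖∫ y, |φ.normed volume (z - f y)| * cofNorm f y ∂σ‖ₑ := by
        refine lintegral_mono fun z ↦ ?_
        rw [← enorm_mul]
        exact enorm_le_iff_norm_le.2 ((hCf hf φ.contDiff_normed φ.hasCompactSupport_normed x hr
          z).trans (Real.le_norm_self _))
    _ = ‖C‖ₑ * ∫⁻ z, ‖∫ y, |φ.normed volume (z - f y)| * cofNorm f y ∂σ‖ₑ :=
        lintegral_const_mul' _ _ enorm_ne_top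
    _ ≤ ‖C‖ₑ * ((∫⁻ z, ‖φ.normed volume z‖ₑ) * ∫⁻ y, ‖cofNorm f y‖ₑ ∂σ) := by
        gcongr
        exact lintegral_enorm_integral_comp_sub_mul_le φ.continuous_normed.measurable
          hf.continuous.measurable hcof.measurable
    _ = ENNReal.ofReal (C * ∫ y, cofNorm f y ∂σ) := by
        rw [hφ1, one_mul, ENNReal.ofReal_mul hC.le, Real.enorm_of_nonneg hC.le,
          ← ofReal_integral_norm_eq_lintegral_enorm hcofI]
        simp [abs_of_nonneg (cofNorm_nonneg f _)]

lemma hasCompactSupport_preimageDegree_ball {f : 𝔼 → 𝔼} (hf : Continuous f) (x : 𝔼) (r : ℝ) :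
    HasCompactSupport fun z ↦ (preimageDegree f (ball x r) z : ℝ) := by
  refine .intro ((isCompact_closedBall x r).image hf) fun z hz ↦ ?_
  rw [preimageDegree_eq_zero fun h ↦ hz (image_mono ball_subset_closedBall h), Int.cast_zero]

lemma lintegral_enorm_intCast_le_eLpNorm_rpow {α : Type*} [MeasurableSpace α] {μ : Measure α}
    (u : α → ℤ) {p : ℝ≥0} (hp : 1 ≤ p) :
    ∫⁻ z, ‖(u z : ℝ)‖ₑ ∂μ ≤ eLpNorm (fun z ↦ (u z : ℝ)) p μ ^ (p : ℝ) := by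
  have hp0 : p ≠ 0 := (one_pos.trans_le hp).ne'
  rw [eLpNorm_nnreal_pow_eq_lintegral hp0]
  refine lintegral_mono fun z ↦ ?_
  rcases eq_or_ne (u z) 0 with hz | hz
  · simp [hz]
  · have h1 : 1 ≤ ‖(u z : ℝ)‖ₑ := by
      rw [← ofReal_norm, ENNReal.one_le_ofReal, Real.norm_eq_abs]
      exact_mod_cast Int.one_le_abs hz
    exact ENNReal.le_rpow_self_of_one_le h1 (by exact_mod_cast hp)

lemma exists_eLpNorm_preimageDegree_ball_le {p : ℝ≥0}
    (hp : (n : ℝ≥0).HolderConjugate p) :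
    ∃ C : ℝ, 0 < C ∧ ∀ {f : 𝔼 → 𝔼}, ContDiff ℝ 1 f → ∀ (x : 𝔼) {r : ℝ}, 0 < r →
      eLpNorm (fun z ↦ (preimageDegree f (ball x r) z : ℝ)) p volume ≤
        ENNReal.ofReal (C * ∫ y in sphere x r, cofNorm f y ∂μH[(n : ℝ) - 1]) := by
  have : Nontrivial (Fin n) := Fin.nontrivial_iff_two_le.2 (by exact_mod_cast hp.lt)
  obtain ⟨C, hC, hCf⟩ := exists_lintegral_enorm_fderiv_convolution_preimageDegree_ball_le (n := n)
  set K := eLpNormLESNormFDerivOneConst (volume : Measure 𝔼) p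
  have hfin : (Module.finrank ℝ 𝔼 : ℝ≥0).HolderConjugate p := by
    rwa [finrank_euclideanSpace_fin]
  refine ⟨(K + 1) * C, by positivity, fun {f} hf x {r} hr ↦ ?_⟩
  have hdeg := integrable_preimageDegree hf measurableSet_ball (integrableOn_ball_det_fderiv hf x r)
  set S := ∫ y in sphere x r, cofNorm f y ∂μH[(n : ℝ) - 1]
  have hS0 : 0 ≤ S := integral_nonneg (cofNorm_nonneg f)
  calc eLpNorm (fun z ↦ (preimageDegree f (ball x r) z : ℝ)) p volume
      ≤ K * ENNReal.ofReal (C * S) :=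
        eLpNorm_le_of_lintegral_enorm_fderiv_convolution_le volume hdeg.locallyIntegrable
          (hasCompactSupport_preimageDegree_ball hf.continuous x r) hfin (hCf hf x hr)
    _ = ENNReal.ofReal (K * (C * S)) := by
        rw [ENNReal.ofReal_mul K.coe_nonneg, ENNReal.ofReal_coe_nnreal]
    _ ≤ ENNReal.ofReal ((K + 1) * C * S) := by
        rw [mul_assoc]
        gcongr
        exact le_add_of_nonneg_right zero_le_one

theorem exists_abs_setIntegral_jacDet_le (hn : 2 ≤ n) :
    ∃ C : ℝ, 0 < C ∧ ∀ {f : 𝔼 → 𝔼}, ContDiff ℝ 1 f → ∀ (x : 𝔼) {r : ℝ}, 0 < r →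
      |∫ y in ball x r, jacDet f y| ≤
        (C * ∫ y in sphere x r, cofNorm f y ∂μH[(n : ℝ) - 1]) ^ ((n : ℝ) / (n - 1)) := by
  have : Nontrivial (Fin n) := Fin.nontrivial_iff_two_le.2 hn
  have hn1 : (1 : ℝ≥0) < n := by exact_mod_cast hn
  have hconj := NNReal.HolderConjugate.conjExponent hn1
  set p := NNReal.conjExponent n
  have hp : (p : ℝ) = n / (n - 1) := hconj.coe.conjugate_eq
  obtain ⟨C, hC, hCf⟩ := exists_eLpNorm_preimageDegree_ball_le hconj
  refine ⟨C, hC, fun {f} hf x {r} hr ↦ ?_⟩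
  set S := ∫ y in sphere x r, cofNorm f y ∂μH[(n : ℝ) - 1]
  have hS : 0 ≤ S := integral_nonneg (cofNorm_nonneg f)
  have hdeg : ∫ y in ball x r, jacDet f y = ∫ z, (preimageDegree f (ball x r) z : ℝ) := by
    simp_rw [jacDet_eq_det_fderiv]
    simpa using setIntegral_det_fderiv_smul_comp (g := fun _ ↦ (1 : ℝ)) hf measurableSet_ball
      (integrableOn_ball_det_fderiv hf x r) stronglyMeasurable_const fun _ ↦ norm_one.le
  have key : ‖∫ y in ball x r, jacDet f y‖ₑ ≤ ENNReal.ofReal ((C * S) ^ (p : ℝ)) := by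
    calc ‖∫ y in ball x r, jacDet f y‖ₑ
        ≤ ∫⁻ z, ‖(preimageDegree f (ball x r) z : ℝ)‖ₑ := by
          rw [hdeg]
          exact enorm_integral_le_lintegral_enorm _
      _ ≤ eLpNorm (fun z ↦ (preimageDegree f (ball x r) z : ℝ)) p volume ^ (p : ℝ) :=
          lintegral_enorm_intCast_le_eLpNorm_rpow _ hconj.symm.lt.le
      _ ≤ ENNReal.ofReal (C * S) ^ (p : ℝ) := by
          gcongr
          exact hCf hf x hr
      _ = ENNReal.ofReal ((C * S) ^ (p : ℝ)) :=
          ENNReal.ofReal_rpow_of_nonneg (by positivity) p.coe_nonneg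
  rwa [← hp, ← ENNReal.ofReal_le_ofReal_iff (by positivity), ← Real.norm_eq_abs, ofReal_norm]

theorem exists_abs_setAverage_jacDet_le (hn : 2 ≤ n) :
    ∃ C : ℝ, 0 < C ∧ ∀ {f : 𝔼 → 𝔼}, ContDiff ℝ 1 f → ∀ (x : 𝔼) {r : ℝ}, 0 < r →
      |⨍ y in ball x r, jacDet f y| ≤
        C * (⨍ y in sphere x r, cofNorm f y ∂μH[(n : ℝ) - 1]) ^ ((n : ℝ) / (n - 1)) := by
  have hn2 : (2 : ℝ) ≤ n := by exact_mod_cast hn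
  have : Nontrivial (Fin n) := Fin.nontrivial_iff_two_le.2 hn
  obtain ⟨C, hC, hCf⟩ := exists_abs_setIntegral_jacDet_le hn
  set p : ℝ := n / (n - 1) with hp
  set A := (μH[(n : ℝ) - 1] : Measure 𝔼).real (sphere 0 1)
  set V := volume.real (ball (0 : 𝔼) 1)
  have hV : 0 < V := ENNReal.toReal_pos (measure_ball_pos _ _ one_pos).ne' measure_ball_lt_top.ne
  have hp0 : 0 ≤ p := div_nonneg (by linarith) (by linarith)
  refine ⟨(C * (A + 1)) ^ p / V, by positivity, fun {f} hf x {r} hr ↦ ?_⟩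
  set a := ⨍ y in sphere x r, cofNorm f y ∂μH[(n : ℝ) - 1] with ha
  have ha0 : 0 ≤ a := by
    rw [ha, setAverage_eq]
    exact smul_nonneg (by positivity) (integral_nonneg (cofNorm_nonneg f))
  have hrp : (r ^ ((n : ℝ) - 1)) ^ p = r ^ n := by
    rw [← Real.rpow_mul hr.le, hp, mul_div_cancel₀ _ (by linarith), Real.rpow_natCast]
  have hball : volume.real (ball x r) = r ^ n * V := by
    rw [measureReal_def, Measure.addHaar_ball_of_pos _ _ hr, finrank_euclideanSpace_fin,
      ENNReal.toReal_mul, ENNReal.toReal_ofReal (by positivity), ← measureReal_def]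
  have hsphere : ∫ y in sphere x r, cofNorm f y ∂μH[(n : ℝ) - 1] =
      r ^ ((n : ℝ) - 1) * A * a := by
    simpa using setIntegral_sphere_eq_smul_setAverage (cofNorm f) x hr
  calc |⨍ y in ball x r, jacDet f y|
      = (r ^ n * V)⁻¹ * |∫ y in ball x r, jacDet f y| := by
        rw [setAverage_eq, smul_eq_mul, abs_mul, hball, abs_of_pos (by positivity)]
    _ ≤ (r ^ n * V)⁻¹ * (C * (r ^ ((n : ℝ) - 1) * (A + 1) * a)) ^ p := by
        gcongr
        refine (hCf hf x hr).trans ?_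
        rw [hsphere]
        gcongr
        exact le_add_of_nonneg_right zero_le_one
    _ = (r ^ n * V)⁻¹ * (r ^ n * ((C * (A + 1)) ^ p * a ^ p)) := by
        rw [← hrp, ← Real.mul_rpow (by positivity) ha0, ← Real.mul_rpow (by positivity)
          (by positivity)]
        ring_nf
    _ = (C * (A + 1)) ^ p / V * a ^ p := by field_simp

end Isoperimetric

/-- Isoperimetric-type inequality for Jacobians: for a `C¹` map on `Ω` and a closed ball
`B(x,r) ⊆ Ω`, `|⨍_{B(x,r)} J(y,f) dy| ≤ C(n) (⨍_{S(x,r)} |D^♯f| )^{n/(n-1)}`. -/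
theorem isoperimetric_jacobian (hn : 2 ≤ n) :
    ∃ C : ℝ, 0 < C ∧
      ∀ (Ω : Set (EuclideanSpace ℝ (Fin n))), IsOpen Ω →
        ∀ f : EuclideanSpace ℝ (Fin n) → EuclideanSpace ℝ (Fin n),
          (∀ y ∈ Ω, ContDiffAt ℝ 1 f y) →
          ∀ (x : EuclideanSpace ℝ (Fin n)) (r : ℝ), 0 < r → Metric.closedBall x r ⊆ Ω →
            |⨍ y in Metric.ball x r, jacDet f y| ≤
              C * (⨍ y in Metric.sphere x r, cofNorm f y ∂(μH[(n : ℝ) - 1])) ^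
                    ((n : ℝ) / (n - 1)) := by
  obtain ⟨C, hC, hCf⟩ := exists_abs_setAverage_jacDet_le hn
  refine ⟨C, hC, fun Ω hΩ f hf x r hr hB ↦ ?_⟩
  obtain ⟨F, hF, -, hFf⟩ := exists_contDiff_hasCompactSupport_eventuallyEq (m := 1)
    (isCompact_closedBall x r) hΩ hB hf
  have hD : ∀ y ∈ closedBall x r, diffMatrix f y = diffMatrix F y := fun y hy ↦
    diffMatrix_congr ((eventually_nhdsSet_iff_forall.1 hFf y hy).mono fun _ ↦ Eq.symm)
  have hJ : ⨍ y in ball x r, jacDet f y = ⨍ y in ball x r, jacDet F y :=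
    setAverage_congr_fun measurableSet_ball <| .of_forall fun y hy ↦
      congrArg Matrix.det (hD y (ball_subset_closedBall hy))
  have hcof : ⨍ y in sphere x r, cofNorm f y ∂(μH[(n : ℝ) - 1]) =
      ⨍ y in sphere x r, cofNorm F y ∂(μH[(n : ℝ) - 1]) :=
    setAverage_congr_fun isClosed_sphere.measurableSet <| .of_forall fun y hy ↦ by
      rw [cofNorm, cofNorm, hD y (sphere_subset_closedBall hy)]
  rw [hJ, hcof]
  exact hCf hF x hr
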